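/- Fix constants R*, ε, η, B > 0. There exists n₀ = n₀(ε, η, R*, B) such that for every n ≥ n₀ there exist a rate R ≤ R* + ε, an encoder f : ℝⁿ × 𝕊₊ⁿ × [0,1] → {1,…,⌊2^{nR}⌋}, and a decoder g : {1,…,⌊2^{nR}⌋} × [0,1] → ℝⁿ with the following property: if S is uniform on [0,1], then with probability at least 1 − exp(−n^B) over S, simultaneously for every positive semidefinite Σ ∈ ℝ^{n×n} with tr(Σ) = n, writing Ŵ(Σ) = g(f(W, Σ, S), S) for W ~ N(0, Iₙ) independent of S, one has (1/n) E_W[d_Σ(W, Ŵ(Σ))] ≤ 𝐃_rc(spec(Σ), R*) + η. -/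

import Mathlib

open MeasureTheory Matrix Real

/-- Standard Gaussian measure `N(0, I_n)` on `ℝⁿ`. -/
noncomputable def stdGaussian (n : ℕ) : Measure (Fin n → ℝ) :=
  Measure.pi fun _ => ProbabilityTheory.gaussianReal 0 1

/-- Distortion `d_Σ(w, v) = (w - v)ᵀ Σ (w - v)`. -/
noncomputable def dSig {n : ℕ} (Sig : Matrix (Fin n) (Fin n) ℝ) (w v : Fin n → ℝ) : ℝ :=
  (w - v) ⬝ᵥ Sig.mulVec (w - v)

/-- Random-coding distortion `D_rc(λ, T) = (1/n) Σᵢ λᵢ/(1 + λᵢ T)`. -/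
noncomputable def Drc {n : ℕ} (lam : Fin n → ℝ) (T : ℝ) : ℝ :=
  (1 / (n : ℝ)) * ∑ i, lam i / (1 + lam i * T)

/-- Random-coding rate `R_rc(λ, T) = (1/(2n)) Σᵢ log₂(1 + λᵢ T)`. -/
noncomputable def Rrc {n : ℕ} (lam : Fin n → ℝ) (T : ℝ) : ℝ :=
  (1 / (2 * (n : ℝ))) * ∑ i, Real.logb 2 (1 + lam i * T)

/-- `T_rc(λ, R)`: the unique `T > 0` with `R_rc(λ, T) = R`. -/
noncomputable def Trc {n : ℕ} (lam : Fin n → ℝ) (R : ℝ) : ℝ :=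
  Classical.epsilon fun T => 0 < T ∧ Rrc lam T = R

/-- `𝐃_rc(λ, R) = D_rc(λ, T_rc(λ, R))`. -/
noncomputable def DDrc {n : ℕ} (lam : Fin n → ℝ) (R : ℝ) : ℝ :=
  Drc lam (Trc lam R)

section Aux

open ProbabilityTheory hiding stdGaussian

lemma pi_withDensity_aux {n : ℕ} (ρ : Fin n → ℝ → ENNReal) (hρ : ∀ i, Measurable (ρ i))
    [hs : ∀ i, SigmaFinite ((gaussianReal 0 1).withDensity (ρ i))] :
    Measure.pi (fun i => (gaussianReal 0 1).withDensity (ρ i)) =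
      (stdGaussian n).withDensity (fun x => ∏ i, ρ i (x i)) := by
  apply Measure.pi_eq
  intro s hms
  rw [withDensity_apply _ (MeasurableSet.univ_pi hms)]
  rw [← lintegral_indicator (MeasurableSet.univ_pi hms)]
  have h1 : (fun x : Fin n → ℝ => (Set.univ.pi s).indicator (fun x => ∏ i, ρ i (x i)) x) =
      fun x => ∏ i, (s i).indicator (ρ i) (x i) := by
    funext x
    by_cases hx : x ∈ Set.univ.pi s
    · rw [Set.indicator_of_mem hx]
      refine Finset.prod_congr rfl fun i _ => ?_
      rw [Set.indicator_of_mem (hx i (Set.mem_univ i))]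
    · rw [Set.indicator_of_notMem hx]
      simp only [Set.mem_pi, Set.mem_univ, true_implies, not_forall] at hx
      obtain ⟨i, hi⟩ := hx
      exact (Finset.prod_eq_zero (Finset.mem_univ i) (Set.indicator_of_notMem hi _)).symm
  have hm : ∀ i, Measurable ((s i).indicator (ρ i)) := fun i => (hρ i).indicator (hms i)
  rw [h1]
  have hind : iIndepFun (fun (i : Fin n) (x : Fin n → ℝ) => (s i).indicator (ρ i) (x i))
      (stdGaussian n) := iIndepFun_pi (fun i => (hm i).aemeasurable)
  rw [lintegral_prod_eq_prod_lintegral_of_indepFun Finset.univ _ hind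
    (fun i => (hm i).comp (measurable_pi_apply i))]
  refine Finset.prod_congr rfl fun i _ => ?_
  have := (measurePreserving_eval (fun _ : Fin n => gaussianReal 0 1) i).lintegral_comp (hm i)
  rw [withDensity_apply _ (hms i), ← lintegral_indicator (hms i)]
  exact this

instance (n : ℕ) : IsProbabilityMeasure (stdGaussian n) := by
  unfold stdGaussian; infer_instance

lemma gaussian_affine (b c : ℝ) (hc : 0 < c) :
    (gaussianReal 0 1).map (fun z => b + c * z) = (gaussianReal 0 1).withDensity
      (fun x => ENNReal.ofReal (Real.exp (-Real.log c - ((x - b) / c) ^ 2 / 2 + x ^ 2 / 2))) := by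
  have h1 : (gaussianReal 0 1).map (fun z => b + c * z) = gaussianReal b (.mk (c ^ 2) (sq_nonneg c)) := by
    have := gaussianReal_map_const_mul (μ := 0) (v := 1) c
    have h2 := gaussianReal_map_const_add (μ := c * 0) (v := (.mk (c ^ 2) (sq_nonneg c) : NNReal) * 1) b
    rw [← this, Measure.map_map (by fun_prop) (by fun_prop)] at h2
    simpa [Function.comp_def] using h2
  have hv : (.mk (c ^ 2) (sq_nonneg c) : NNReal) ≠ 0 := by
    intro h
    have : c ^ 2 = 0 := congrArg NNReal.toReal h
    exact (pow_pos hc 2).ne' this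
  rw [h1, gaussianReal_of_var_ne_zero _ hv, gaussianReal_of_var_ne_zero _ one_ne_zero,
    ← withDensity_mul _ (measurable_gaussianPDF _ _) (by fun_prop)]
  congr 1
  funext x
  simp only [Pi.mul_apply, gaussianPDF]
  rw [← ENNReal.ofReal_mul (gaussianPDFReal_nonneg _ _ _)]
  congr 1
  simp only [gaussianPDFReal, NNReal.coe_mk, NNReal.coe_one]
  have h3 : √(2 * π * c ^ 2) = √(2 * π * 1) * c := by
    rw [mul_one, Real.sqrt_mul (by positivity), Real.sqrt_sq hc.le]
  rw [h3, mul_inv, mul_assoc (√(2 * π * 1))⁻¹, mul_assoc (√(2 * π * 1))⁻¹]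
  congr 1
  rw [← Real.exp_add]
  have h4 : c⁻¹ = Real.exp (-Real.log c) := by rw [Real.exp_neg, Real.exp_log hc]
  rw [h4, ← Real.exp_add]
  congr 1
  field_simp
  ring

lemma change_measure {n : ℕ} (b c : Fin n → ℝ) (hc : ∀ i, 0 < c i) (B : Set (Fin n → ℝ))
    (hB : MeasurableSet B) (r : ℝ) :
    stdGaussian n {z | (fun i => b i + c i * z i) ∈ B ∧
      ∑ i, (-Real.log (c i) - z i ^ 2 / 2 + (b i + c i * z i) ^ 2 / 2) ≤ r} ≤
      ENNReal.ofReal (Real.exp r) * stdGaussian n B := by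
  set ρ : Fin n → ℝ → ENNReal := fun i x => ENNReal.ofReal
    (Real.exp (-Real.log (c i) - ((x - b i) / c i) ^ 2 / 2 + x ^ 2 / 2)) with hρ
  have hρm : ∀ i, Measurable (ρ i) := fun i => by simp only [hρ]; fun_prop
  have hmap : ∀ i, (gaussianReal 0 1).map (fun z => b i + c i * z) =
      (gaussianReal 0 1).withDensity (ρ i) := fun i => gaussian_affine (b i) (c i) (hc i)
  have hprob : ∀ i, IsProbabilityMeasure ((gaussianReal 0 1).withDensity (ρ i)) := fun i => by
    rw [← hmap i]; exact Measure.isProbabilityMeasure_map (by fun_prop)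
  have hpi : (stdGaussian n).map (fun z i => b i + c i * z i) =
      (stdGaussian n).withDensity (fun x => ∏ i, ρ i (x i)) := by
    rw [← pi_withDensity_aux ρ hρm]
    unfold stdGaussian
    have : ∀ i, SigmaFinite ((gaussianReal 0 1).map (fun z => b i + c i * z)) := fun i => by
      rw [hmap i]; infer_instance
    have := Measure.pi_map_pi (μ := fun _ : Fin n => gaussianReal 0 1)
      (f := fun i z => b i + c i * z) (fun i => by fun_prop)
    rw [this]
    congr 1
    funext i
    exact hmap i
  set S : Set (Fin n → ℝ) := {x | x ∈ B ∧
    ∑ i, (-Real.log (c i) - ((x i - b i) / c i) ^ 2 / 2 + x i ^ 2 / 2) ≤ r} with hS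
  have hSm : MeasurableSet S := by
    have h : MeasurableSet {x : Fin n → ℝ |
        ∑ i, (-Real.log (c i) - ((x i - b i) / c i) ^ 2 / 2 + x i ^ 2 / 2) ≤ r} :=
      measurableSet_le (by fun_prop) measurable_const
    exact hB.inter h
  have hset : {z : Fin n → ℝ | (fun i => b i + c i * z i) ∈ B ∧
      ∑ i, (-Real.log (c i) - z i ^ 2 / 2 + (b i + c i * z i) ^ 2 / 2) ≤ r} =
      (fun z i => b i + c i * z i) ⁻¹' S := by
    ext z
    simp only [hS, Set.mem_ofPred_eq, Set.mem_preimage]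
    have : ∀ i, (b i + c i * z i - b i) / c i = z i := fun i => by
      have := (hc i).ne'
      field_simp
      ring
    simp only [this]
  rw [hset, ← Measure.map_apply (by fun_prop) hSm, hpi, withDensity_apply _ hSm]
  calc ∫⁻ x in S, ∏ i, ρ i (x i) ∂(stdGaussian n)
      ≤ ∫⁻ x in S, ENNReal.ofReal (Real.exp r) ∂(stdGaussian n) := by
        apply setLIntegral_mono measurable_const
        intro x hx
        simp only [hρ]
        rw [← ENNReal.ofReal_prod_of_nonneg (fun _ _ => (Real.exp_pos _).le), ← Real.exp_sum]
        exact ENNReal.ofReal_le_ofReal (Real.exp_le_exp.2 hx.2)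
    _ = ENNReal.ofReal (Real.exp r) * stdGaussian n S := by simp
    _ ≤ _ := by gcongr; exact fun x hx => hx.1

lemma mp_orth {n : ℕ} (U : Matrix (Fin n) (Fin n) ℝ) (hU : U * Uᵀ = 1) :
    MeasurePreserving (fun w => U *ᵥ w) (stdGaussian n) (stdGaussian n) := by
  refine ⟨by fun_prop, ?_⟩
  have h1 := map_pi_eq_stdGaussian (ι := Fin n)
  have hU' : Uᵀ * U = 1 := mul_eq_one_comm.1 hU
  let L : EuclideanSpace ℝ (Fin n) →ₗᵢ[ℝ] EuclideanSpace ℝ (Fin n) :=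
    { toLinearMap := Matrix.toEuclideanLin U
      norm_map' := by
        intro x
        rw [← sq_eq_sq₀ (norm_nonneg _) (norm_nonneg _), EuclideanSpace.real_norm_sq_eq,
          EuclideanSpace.real_norm_sq_eq]
        have h2 : (U *ᵥ x.ofLp) ⬝ᵥ (U *ᵥ x.ofLp) = x.ofLp ⬝ᵥ x.ofLp := by
          rw [Matrix.dotProduct_mulVec, ← Matrix.mulVec_transpose, Matrix.mulVec_mulVec, hU',
            Matrix.one_mulVec]
        simpa [dotProduct, sq] using h2 }
  let L' := L.toLinearIsometryEquiv rfl
  have h2 := stdGaussian_map L'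
  rw [← h1, Measure.map_map (by fun_prop) (by fun_prop)] at h2
  have h3 := congrArg (fun m => Measure.map (WithLp.ofLp : EuclideanSpace ℝ (Fin n) → _) m) h2
  simp only at h3
  rw [Measure.map_map (by fun_prop) (by fun_prop), Measure.map_map (by fun_prop) (by fun_prop)] at h3
  unfold _root_.stdGaussian
  have h4 : (WithLp.ofLp : EuclideanSpace ℝ (Fin n) → _) ∘ WithLp.toLp 2 = id := rfl
  rw [h4, Measure.map_id] at h3
  exact h3

/-- product of two standard Gaussians on the line -/
noncomputable def gam2 : Measure (ℝ × ℝ) := (gaussianReal 0 1).prod (gaussianReal 0 1)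

instance : IsProbabilityMeasure gam2 := by unfold gam2; infer_instance

/-- Gaussian fourth moment -/
noncomputable def mom4 : ℝ := ∫ x, x ^ 4 ∂(gaussianReal 0 1)

lemma mom4_nonneg : 0 ≤ mom4 := integral_nonneg fun x => by positivity

lemma int_pow (k : ℕ) : Integrable (fun x : ℝ => x ^ k) (gaussianReal 0 1) := by
  have h := memLp_id_gaussianReal (μ := 0) (v := 1) (k : NNReal)
  have h2 : MemLp (id : ℝ → ℝ) (k : ℕ) (gaussianReal 0 1) := by simpa using h
  have := h2.integrable_norm_pow'
  refine (integrable_norm_iff (by fun_prop)).1 (this.congr ?_)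
  filter_upwards with x
  simp

lemma int_one : ∫ x : ℝ, x ∂(gaussianReal 0 1) = 0 := by
  simp

lemma int_sq : ∫ x : ℝ, x ^ 2 ∂(gaussianReal 0 1) = 1 := by
  have h := variance_id_gaussianReal (μ := 0) (v := 1)
  rw [variance_of_integral_eq_zero (by fun_prop) (by simp)] at h
  simpa using h

lemma int2_fst (k : ℕ) : Integrable (fun p : ℝ × ℝ => p.1 ^ k) gam2 :=
  (int_pow k).comp_fst _

lemma int2_snd (k : ℕ) : Integrable (fun p : ℝ × ℝ => p.2 ^ k) gam2 :=
  (int_pow k).comp_snd _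

lemma int2_mul (k l : ℕ) : Integrable (fun p : ℝ × ℝ => p.1 ^ k * p.2 ^ l) gam2 :=
  (int_pow k).mul_prod (int_pow l)

lemma val2_fst (k : ℕ) : ∫ p : ℝ × ℝ, p.1 ^ k ∂gam2 = ∫ x, x ^ k ∂(gaussianReal 0 1) := by
  unfold gam2
  rw [integral_fun_fst (fun x : ℝ => x ^ k)]
  simp

lemma val2_snd (k : ℕ) : ∫ p : ℝ × ℝ, p.2 ^ k ∂gam2 = ∫ x, x ^ k ∂(gaussianReal 0 1) := by
  unfold gam2
  rw [integral_fun_snd (fun x : ℝ => x ^ k)]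
  simp

lemma val2_mul (k l : ℕ) : ∫ p : ℝ × ℝ, p.1 ^ k * p.2 ^ l ∂gam2 =
    (∫ x, x ^ k ∂(gaussianReal 0 1)) * ∫ x, x ^ l ∂(gaussianReal 0 1) := by
  unfold gam2
  exact integral_prod_mul (fun x : ℝ => x ^ k) (fun x : ℝ => x ^ l)

/-- a quadratic form in two variables -/
def qf (k α β κ : ℝ) (p : ℝ × ℝ) : ℝ := k + (α * p.1 ^ 2 + β * (p.1 * p.2) + κ * p.2 ^ 2)

lemma qf_cont (k α β κ : ℝ) : Continuous (qf k α β κ) := by unfold qf; fun_prop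

lemma qf_sq_le (α β κ : ℝ) (p : ℝ × ℝ) : (qf 0 α β κ p) ^ 2 ≤
    3 * (α ^ 2 * p.1 ^ 4 + β ^ 2 * (p.1 ^ 2 * p.2 ^ 2) + κ ^ 2 * p.2 ^ 4) := by
  unfold qf
  nlinarith [sq_nonneg (α * p.1 ^ 2 - β * (p.1 * p.2)), sq_nonneg (α * p.1 ^ 2 - κ * p.2 ^ 2),
    sq_nonneg (β * (p.1 * p.2) - κ * p.2 ^ 2)]

lemma qf_bound_int (α β κ : ℝ) : Integrable (fun p : ℝ × ℝ =>
    3 * (α ^ 2 * p.1 ^ 4 + β ^ 2 * (p.1 ^ 2 * p.2 ^ 2) + κ ^ 2 * p.2 ^ 4)) gam2 :=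
  ((((int2_fst 4).const_mul _).add ((int2_mul 2 2).const_mul _)).add
    ((int2_snd 4).const_mul _)).const_mul _

lemma qf0_memLp (α β κ : ℝ) : MemLp (qf 0 α β κ) 2 gam2 := by
  rw [memLp_two_iff_integrable_sq (qf_cont _ _ _ _).aestronglyMeasurable]
  refine (qf_bound_int α β κ).mono' ((qf_cont _ _ _ _).pow 2).aestronglyMeasurable ?_
  filter_upwards with p
  rw [Real.norm_of_nonneg (sq_nonneg _)]
  exact qf_sq_le α β κ p

lemma qf_eq (k α β κ : ℝ) : qf k α β κ = fun p => k + qf 0 α β κ p := by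
  funext p; simp [qf]

lemma qf_memLp (k α β κ : ℝ) : MemLp (qf k α β κ) 2 gam2 := by
  rw [qf_eq]
  exact (memLp_const k).add (qf0_memLp α β κ)

lemma qf_mean (k α β κ : ℝ) : ∫ p, qf k α β κ p ∂gam2 = k + α + κ := by
  unfold qf
  have h1 : Integrable (fun p : ℝ × ℝ => α * p.1 ^ 2) gam2 := (int2_fst 2).const_mul _
  have h2 : Integrable (fun p : ℝ × ℝ => β * (p.1 * p.2)) gam2 := by
    simpa using (int2_mul 1 1).const_mul β
  have h3 : Integrable (fun p : ℝ × ℝ => κ * p.2 ^ 2) gam2 := (int2_snd 2).const_mul _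
  have h4 : ∫ p : ℝ × ℝ, p.1 * p.2 ∂gam2 = 0 := by
    have := val2_mul 1 1
    simpa [int_one] using this
  have h12 : Integrable (fun p : ℝ × ℝ => α * p.1 ^ 2 + β * (p.1 * p.2)) gam2 := h1.add h2
  have h123 : Integrable (fun p : ℝ × ℝ => α * p.1 ^ 2 + β * (p.1 * p.2) + κ * p.2 ^ 2) gam2 :=
    h12.add h3
  rw [integral_add (integrable_const _) h123, integral_add h12 h3,
    integral_add h1 h2, integral_const_mul, integral_const_mul, integral_const_mul, val2_fst,
    val2_snd, int_sq, h4]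
  simp
  ring

lemma qf_var (k α β κ : ℝ) :
    Var[qf k α β κ; gam2] ≤ 3 * (mom4 + 1) * (α ^ 2 + β ^ 2 + κ ^ 2) := by
  rw [qf_eq, variance_const_add (qf_cont _ _ _ _).aestronglyMeasurable]
  refine (variance_le_expectation_sq (qf_cont _ _ _ _).aestronglyMeasurable).trans ?_
  have h := integral_mono (qf0_memLp α β κ).integrable_sq (qf_bound_int α β κ)
    (fun p => qf_sq_le α β κ p)
  refine le_trans h ?_
  have h12 : Integrable (fun p : ℝ × ℝ => α ^ 2 * p.1 ^ 4 + β ^ 2 * (p.1 ^ 2 * p.2 ^ 2)) gam2 :=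
    ((int2_fst 4).const_mul _).add ((int2_mul 2 2).const_mul _)
  rw [integral_const_mul, integral_add h12
    ((int2_snd 4).const_mul _), integral_add ((int2_fst 4).const_mul _) ((int2_mul 2 2).const_mul _),
    integral_const_mul, integral_const_mul, integral_const_mul, val2_fst, val2_snd, val2_mul, int_sq]
  have h0 := mom4_nonneg
  change 3 * (α ^ 2 * mom4 + β ^ 2 * (1 * 1) + κ ^ 2 * mom4) ≤ _
  nlinarith [mul_nonneg h0 (sq_nonneg β), sq_nonneg α, sq_nonneg κ]

lemma cheb_quad {n : ℕ} (k α β κ : Fin n → ℝ) (μ V δ : ℝ) (hμ : ∑ i, (k i + α i + κ i) ≤ μ)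
    (hV : 3 * (mom4 + 1) * ∑ i, (α i ^ 2 + β i ^ 2 + κ i ^ 2) ≤ V) (hδ : 0 < δ) :
    ((stdGaussian n).prod (stdGaussian n)) {p | μ + δ ≤
      ∑ i, qf (k i) (α i) (β i) (κ i) (p.1 i, p.2 i)} ≤ ENNReal.ofReal (V / δ ^ 2) := by
  have hmp := measurePreserving_arrowProdEquivProdArrow ℝ ℝ (Fin n) (fun _ => gaussianReal 0 1)
    (fun _ => gaussianReal 0 1)
  have hms : MeasurableSet {p : (Fin n → ℝ) × (Fin n → ℝ) | μ + δ ≤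
      ∑ i, qf (k i) (α i) (β i) (κ i) (p.1 i, p.2 i)} := by
    apply measurableSet_le measurable_const
    unfold qf
    fun_prop
  have h1 := hmp.measure_preimage hms.nullMeasurableSet
  unfold _root_.stdGaussian
  rw [← h1]
  set X : Fin n → ℝ × ℝ → ℝ := fun i => qf (k i) (α i) (β i) (κ i) with hX
  have hXm : ∀ i, MemLp (X i) 2 gam2 := fun i => qf_memLp _ _ _ _
  have hvar := variance_sum_pi (μ := fun _ : Fin n => gam2) (X := X) hXm
  have hXm' : ∀ i, MemLp (fun ω : Fin n → ℝ × ℝ => X i (ω i)) 2 (Measure.pi fun _ => gam2) :=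
    fun i => (hXm i).comp_measurePreserving (measurePreserving_eval (fun _ : Fin n => gam2) i)
  have hS : MemLp (∑ i, fun ω : Fin n → ℝ × ℝ => X i (ω i)) 2 (Measure.pi fun _ => gam2) :=
    memLp_finsetSum' _ fun i _ => hXm' i
  have hc := meas_ge_le_variance_div_sq hS hδ
  have hmean : ∫ ω, (∑ i, fun ω : Fin n → ℝ × ℝ => X i (ω i)) ω ∂(Measure.pi fun _ => gam2) ≤ μ := by
    simp only [Finset.sum_apply]
    rw [integral_finsetSum _ (fun i _ => (hXm' i).integrable (by norm_num))]
    refine le_trans (le_of_eq (Finset.sum_congr rfl fun i _ => ?_)) hμ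
    rw [integral_comp_eval (μ := fun _ : Fin n => gam2) (hXm i).aestronglyMeasurable]
    exact qf_mean _ _ _ _
  refine le_trans (measure_mono ?_) (hc.trans (ENNReal.ofReal_le_ofReal ?_))
  · intro ω hω
    have hω' : μ + δ ≤ ∑ i, X i (ω i) := hω
    show δ ≤ |_|
    refine le_trans ?_ (le_abs_self _)
    simp only [Finset.sum_apply] at hmean ⊢
    linarith
  · gcongr
    rw [hvar]
    refine le_trans (Finset.sum_le_sum fun i _ => qf_var _ _ _ _) ?_
    rw [← Finset.mul_sum]
    exact hV

/-- the covering set of a source word `w`, in the eigenbasis -/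
def Bset {n : ℕ} (lam : Fin n → ℝ) (σ D : ℝ) (w : Fin n → ℝ) : Set (Fin n → ℝ) :=
  {x | ∑ i, lam i * (w i - σ * x i) ^ 2 ≤ n * D ∧ ∑ i, (w i - σ * x i) ^ 2 ≤ 3 * n}

/-- variance constant -/
noncomputable def C0 : ℝ := 3 * (mom4 + 1)

lemma C0_pos : 0 < C0 := by unfold C0; linarith [mom4_nonneg]

lemma dist_bound {n : ℕ} (hn : 0 < n) (lam : Fin n → ℝ) (a c : Fin n → ℝ) (T σ θ δ : ℝ) (hT : 0 < T)
    (hσ0 : 0 < σ) (hσ1 : σ ≤ 1) (ha0 : ∀ i, 0 ≤ a i) (ha1 : ∀ i, a i < 1)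
    (hl : ∀ i, lam i * (1 - a i) = a i / T) (hc : ∀ i, c i ^ 2 = 1 - a i)
    (hs2 : σ ^ 2 * ∑ i, a i ≤ ∑ i, a i ^ 2 + n * θ) (hδ : 0 < δ) :
    ((stdGaussian n).prod (stdGaussian n)) {p | n * ((1 / (n : ℝ)) * ∑ i, a i / T + θ / T + δ) ≤
      ∑ i, lam i * ((1 - a i) * p.1 i - σ * c i * p.2 i) ^ 2} ≤
      ENNReal.ofReal (6 * C0 / (n * (T * δ) ^ 2)) := by
  have hn' : (0 : ℝ) < n := by exact_mod_cast hn
  have key := cheb_quad (n := n) (fun _ => 0) (fun i => lam i * (1 - a i) ^ 2)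
    (fun i => - 2 * lam i * (1 - a i) * σ * c i) (fun i => lam i * σ ^ 2 * c i ^ 2)
    (∑ i, a i / T + n * θ / T) (n * (6 * C0 / T ^ 2)) (n * δ) ?_ ?_ (by positivity)
  · have e1 : n * (6 * C0 / T ^ 2) / (n * δ) ^ 2 = 6 * C0 / (n * (T * δ) ^ 2) := by
      field_simp
    rw [e1] at key
    refine le_trans (measure_mono ?_) key
    intro p hp
    have hp' : n * ((1 / (n : ℝ)) * ∑ i, a i / T + θ / T + δ) ≤
      ∑ i, lam i * ((1 - a i) * p.1 i - σ * c i * p.2 i) ^ 2 := hp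
    rw [Set.mem_ofPred_eq]
    have e2 : n * ((1 / (n : ℝ)) * ∑ i, a i / T + θ / T + δ) =
        ∑ i, a i / T + n * θ / T + n * δ := by field_simp
    rw [e2] at hp'
    refine hp'.trans (le_of_eq (Finset.sum_congr rfl fun i _ => ?_))
    unfold qf
    ring
  · have e3 : ∀ i, 0 + lam i * (1 - a i) ^ 2 + lam i * σ ^ 2 * c i ^ 2 =
        (a i - a i ^ 2 + σ ^ 2 * a i) / T := fun i => by
      rw [hc i]
      calc 0 + lam i * (1 - a i) ^ 2 + lam i * σ ^ 2 * (1 - a i)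
          = lam i * (1 - a i) * ((1 - a i) + σ ^ 2) := by ring
        _ = _ := by rw [hl i]; ring
    rw [Finset.sum_congr rfl fun i _ => e3 i, ← Finset.sum_div, ← Finset.sum_div, ← add_div,
      Finset.sum_add_distrib, Finset.sum_sub_distrib, ← Finset.mul_sum]
    refine div_le_div_of_nonneg_right ?_ hT.le
    linarith
  · have e4 : ∀ i, (lam i * (1 - a i) ^ 2) ^ 2 + (- 2 * lam i * (1 - a i) * σ * c i) ^ 2 +
        (lam i * σ ^ 2 * c i ^ 2) ^ 2 ≤ 6 / T ^ 2 := fun i => by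
      have h1 : (lam i * (1 - a i) ^ 2) ^ 2 + (- 2 * lam i * (1 - a i) * σ * c i) ^ 2 +
        (lam i * σ ^ 2 * c i ^ 2) ^ 2 = (lam i * (1 - a i)) ^ 2 *
          ((1 - a i) ^ 2 + 4 * σ ^ 2 * (1 - a i) + σ ^ 4) := by
        have : (- 2 * lam i * (1 - a i) * σ * c i) ^ 2 =
          4 * lam i ^ 2 * (1 - a i) ^ 2 * σ ^ 2 * c i ^ 2 := by ring
        rw [this, hc i]; ring
      rw [h1, hl i, div_pow, div_mul_eq_mul_div]
      have h0 := ha0 i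
      have h2 := ha1 i
      have h3 : a i ^ 2 ≤ 1 := by nlinarith
      have h4 : (1 - a i) ^ 2 ≤ 1 := by nlinarith
      have h5 : σ ^ 2 ≤ 1 := by nlinarith
      have h6 : σ ^ 4 ≤ 1 := by nlinarith [sq_nonneg σ]
      have h7 : σ ^ 2 * (1 - a i) ≤ 1 := by nlinarith [sq_nonneg σ]
      gcongr
      have h8 : 0 ≤ (1 - a i) ^ 2 + 4 * σ ^ 2 * (1 - a i) + σ ^ 4 := by
        have : 0 ≤ 1 - a i := by linarith
        positivity
      nlinarith
    change C0 * _ ≤ _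
    calc C0 * ∑ i, ((lam i * (1 - a i) ^ 2) ^ 2 + (- 2 * lam i * (1 - a i) * σ * c i) ^ 2 +
        (lam i * σ ^ 2 * c i ^ 2) ^ 2) ≤ C0 * ∑ i : Fin n, 6 / T ^ 2 := by
          have := C0_pos
          gcongr with i _
          exact e4 i
      _ = n * (6 * C0 / T ^ 2) := by simp; ring

lemma norm_bound {n : ℕ} (hn : 0 < n) (a c : Fin n → ℝ) (σ : ℝ)
    (hσ0 : 0 < σ) (hσ1 : σ ≤ 1) (ha0 : ∀ i, 0 ≤ a i) (ha1 : ∀ i, a i < 1)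
    (hc : ∀ i, c i ^ 2 = 1 - a i) :
    ((stdGaussian n).prod (stdGaussian n)) {p | 3 * (n : ℝ) ≤
      ∑ i, ((1 - a i) * p.1 i - σ * c i * p.2 i) ^ 2} ≤
      ENNReal.ofReal (6 * C0 / n) := by
  have hn' : (0 : ℝ) < n := by exact_mod_cast hn
  have h5 : σ ^ 2 ≤ 1 := by nlinarith
  have h6 : σ ^ 4 ≤ 1 := by nlinarith [sq_nonneg σ]
  have key := cheb_quad (n := n) (fun _ => 0) (fun i => (1 - a i) ^ 2)
    (fun i => - 2 * (1 - a i) * σ * c i) (fun i => σ ^ 2 * c i ^ 2)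
    (2 * n) (n * (6 * C0)) n ?_ ?_ (by positivity)
  · have e1 : n * (6 * C0) / (n : ℝ) ^ 2 = 6 * C0 / n := by field_simp
    rw [e1] at key
    refine le_trans (measure_mono ?_) key
    intro p hp
    have hp' : 3 * (n : ℝ) ≤ ∑ i, ((1 - a i) * p.1 i - σ * c i * p.2 i) ^ 2 := hp
    rw [Set.mem_ofPred_eq]
    have e2 : 2 * (n : ℝ) + n = 3 * n := by ring
    rw [e2]
    refine hp'.trans (le_of_eq (Finset.sum_congr rfl fun i _ => ?_))
    unfold qf
    ring
  · have e3 : ∀ i, 0 + (1 - a i) ^ 2 + σ ^ 2 * c i ^ 2 ≤ 2 := fun i => by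
      rw [hc i]
      have h0 := ha0 i
      have h2 := ha1 i
      have h4 : (1 - a i) ^ 2 ≤ 1 := by nlinarith
      nlinarith [sq_nonneg σ]
    refine (Finset.sum_le_sum fun i _ => e3 i).trans (le_of_eq ?_)
    simp; ring
  · have e4 : ∀ i, ((1 - a i) ^ 2) ^ 2 + (- 2 * (1 - a i) * σ * c i) ^ 2 +
        (σ ^ 2 * c i ^ 2) ^ 2 ≤ 6 := fun i => by
      have : (- 2 * (1 - a i) * σ * c i) ^ 2 = 4 * (1 - a i) ^ 2 * σ ^ 2 * c i ^ 2 := by ring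
      rw [this, hc i]
      have h0 := ha0 i
      have h2 := ha1 i
      have h3 : 0 ≤ 1 - a i := by linarith
      have h4 : (1 - a i) ≤ 1 := by linarith
      generalize 1 - a i = t at *
      have g1 : (t ^ 2) ^ 2 ≤ 1 := pow_le_one₀ (by positivity) (pow_le_one₀ h3 h4)
      have g2 : t ^ 2 * σ ^ 2 * t ≤ 1 := mul_le_one₀ (mul_le_one₀ (pow_le_one₀ h3 h4)
        (by positivity) h5) h3 h4
      have g3 : (σ ^ 2 * t) ^ 2 ≤ 1 := pow_le_one₀ (by positivity) (mul_le_one₀ h5 h3 h4)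
      linarith
    change C0 * _ ≤ _
    refine le_trans (mul_le_mul_of_nonneg_left (Finset.sum_le_sum fun i _ => e4 i) C0_pos.le) ?_
    simp
    linarith

lemma llr_bound {n : ℕ} (hn : 0 < n) (a c : Fin n → ℝ) (σ r δ : ℝ)
    (hσ0 : 0 < σ) (ha0 : ∀ i, 0 ≤ a i) (ha1 : ∀ i, a i < 1)
    (hc : ∀ i, c i ^ 2 = 1 - a i) (hs1 : ∑ i, a i ^ 2 ≤ σ ^ 2 * ∑ i, a i)
    (hr : ∑ i, (-Real.log (c i)) = r) (hδ : 0 < δ) :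
    ((stdGaussian n).prod (stdGaussian n)) {p | r + n * δ ≤
      ∑ i, (-Real.log (c i) - p.2 i ^ 2 / 2 + (a i * p.1 i / σ + c i * p.2 i) ^ 2 / 2)} ≤
      ENNReal.ofReal (2 * C0 / (n * δ ^ 2)) := by
  have hn' : (0 : ℝ) < n := by exact_mod_cast hn
  have key := cheb_quad (n := n) (fun i => -Real.log (c i)) (fun i => a i ^ 2 / σ ^ 2 / 2)
    (fun i => a i * c i / σ) (fun i => - a i / 2)
    r (n * (2 * C0)) (n * δ) ?_ ?_ (by positivity)
  · have e1 : n * (2 * C0) / (n * δ) ^ 2 = 2 * C0 / (n * δ ^ 2) := by field_simp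
    rw [e1] at key
    refine le_trans (measure_mono ?_) key
    intro p hp
    rw [Set.mem_ofPred_eq] at hp ⊢
    refine le_trans hp (le_of_eq (Finset.sum_congr rfl fun i _ => ?_))
    unfold qf
    have : (a i * p.1 i / σ + c i * p.2 i) ^ 2 / 2 = a i ^ 2 / σ ^ 2 / 2 * p.1 i ^ 2 +
      a i * c i / σ * (p.1 i * p.2 i) + c i ^ 2 * p.2 i ^ 2 / 2 := by field_simp; ring
    rw [this, hc i]
    ring
  · rw [Finset.sum_add_distrib, Finset.sum_add_distrib, hr, ← Finset.sum_div, ← Finset.sum_div,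
      ← Finset.sum_div, Finset.sum_neg_distrib]
    have : (∑ i, a i ^ 2) / σ ^ 2 ≤ ∑ i, a i := by
      rw [div_le_iff₀ (by positivity)]; linarith
    linarith
  · have e4 : ∀ i, (a i ^ 2 / σ ^ 2 / 2) ^ 2 + (a i * c i / σ) ^ 2 + (- a i / 2) ^ 2 ≤
        1 + a i ^ 2 / σ ^ 4 := fun i => by
      have h0 := ha0 i
      have h2 := ha1 i
      have h3 : a i ^ 2 ≤ 1 := by nlinarith
      have h1 : (a i * c i / σ) ^ 2 = a i ^ 2 / σ ^ 2 * (1 - a i) := by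
        rw [div_pow, mul_pow, hc i]; ring
      rw [h1]
      have h4 : (a i ^ 2 / σ ^ 2) ^ 2 ≤ a i ^ 2 / σ ^ 4 := by
        rw [div_pow, show (σ ^ 2) ^ 2 = σ ^ 4 by ring]
        gcongr
        nlinarith [sq_nonneg (a i)]
      have h5 : 0 ≤ a i ^ 2 / σ ^ 2 := by positivity
      generalize a i ^ 2 / σ ^ 2 = u at *
      nlinarith [sq_nonneg (u - 1)]
    have e5 : ∑ i, a i ^ 2 / σ ^ 4 ≤ n := by
      rw [← Finset.sum_div, div_le_iff₀ (by positivity)]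
      have hcs : (∑ i, a i) ^ 2 ≤ n * ∑ i, a i ^ 2 := by
        have := sq_sum_le_card_mul_sum_sq (s := Finset.univ) (f := a)
        simpa using this
      set A := ∑ i, a i
      set A2 := ∑ i, a i ^ 2
      have hA : 0 ≤ A := Finset.sum_nonneg fun i _ => ha0 i
      have hA2 : 0 ≤ A2 := Finset.sum_nonneg fun i _ => sq_nonneg _
      rcases hA2.eq_or_lt with h | h
      · rw [← h]; positivity
      · have h1 : A2 ^ 2 ≤ (σ ^ 2 * A) ^ 2 := by gcongr
        have h2 : A2 * A2 ≤ (n * σ ^ 4) * A2 := by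
          calc A2 * A2 = A2 ^ 2 := by ring
            _ ≤ (σ ^ 2 * A) ^ 2 := h1
            _ = σ ^ 4 * A ^ 2 := by ring
            _ ≤ σ ^ 4 * (n * A2) := by gcongr
            _ = _ := by ring
        exact le_of_mul_le_mul_right h2 h
    change C0 * _ ≤ _
    refine le_trans (mul_le_mul_of_nonneg_left (Finset.sum_le_sum fun i _ => e4 i) C0_pos.le) ?_
    rw [Finset.sum_add_distrib]
    simp only [Finset.sum_const, Finset.card_univ, Fintype.card_fin, nsmul_eq_mul, mul_one]
    nlinarith [C0_pos]

lemma Bset_meas {n : ℕ} (lam : Fin n → ℝ) (σ D : ℝ) (w : Fin n → ℝ) :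
    MeasurableSet (Bset lam σ D w) := by
  have h1 : MeasurableSet {x : Fin n → ℝ | ∑ i, lam i * (w i - σ * x i) ^ 2 ≤ n * D} :=
    measurableSet_le (by fun_prop) measurable_const
  have h2 : MeasurableSet {x : Fin n → ℝ | ∑ i, (w i - σ * x i) ^ 2 ≤ 3 * n} :=
    measurableSet_le (by fun_prop) measurable_const
  exact h1.inter h2

lemma cover_abs {n : ℕ} (hn : 0 < n) (lam : Fin n → ℝ) (a c : Fin n → ℝ) (T σ θ δ r : ℝ) (hT : 0 < T)
    (hσ0 : 0 < σ) (hσ1 : σ ≤ 1) (ha0 : ∀ i, 0 ≤ a i) (ha1 : ∀ i, a i < 1)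
    (hl : ∀ i, lam i * (1 - a i) = a i / T) (hc0 : ∀ i, 0 < c i) (hc : ∀ i, c i ^ 2 = 1 - a i)
    (hs1 : ∑ i, a i ^ 2 ≤ σ ^ 2 * ∑ i, a i)
    (hs2 : σ ^ 2 * ∑ i, a i ≤ ∑ i, a i ^ 2 + n * θ)
    (hr : ∑ i, (-Real.log (c i)) = r) (hδ : 0 < δ) :
    stdGaussian n {w | ENNReal.ofReal (Real.exp (r + n * δ)) *
      stdGaussian n (Bset lam σ ((1 / (n : ℝ)) * ∑ i, a i / T + θ / T + δ) w) < 1 / 2} ≤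
      2 * (ENNReal.ofReal (6 * C0 / (n * (T * δ) ^ 2)) + ENNReal.ofReal (6 * C0 / n) +
        ENNReal.ofReal (2 * C0 / (n * δ ^ 2))) := by
  set D := (1 / (n : ℝ)) * ∑ i, a i / T + θ / T + δ with hD
  have h1 := dist_bound hn lam a c T σ θ δ hT hσ0 hσ1 ha0 ha1 hl hc hs2 hδ
  have h2 := norm_bound hn a c σ hσ0 hσ1 ha0 ha1 hc
  have h3 := llr_bound hn a c σ r δ hσ0 ha0 ha1 hc hs1 hr hδ
  rw [← hD] at h1
  set E1 := {p : (Fin n → ℝ) × (Fin n → ℝ) | n * D ≤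
      ∑ i, lam i * ((1 - a i) * p.1 i - σ * c i * p.2 i) ^ 2} with hE1
  set E2 := {p : (Fin n → ℝ) × (Fin n → ℝ) | 3 * (n : ℝ) ≤
      ∑ i, ((1 - a i) * p.1 i - σ * c i * p.2 i) ^ 2} with hE2
  set E3 := {p : (Fin n → ℝ) × (Fin n → ℝ) | r + n * δ ≤
      ∑ i, (-Real.log (c i) - p.2 i ^ 2 / 2 + (a i * p.1 i / σ + c i * p.2 i) ^ 2 / 2)} with hE3
  have hm1 : MeasurableSet E1 := measurableSet_le measurable_const (by fun_prop)
  have hm2 : MeasurableSet E2 := measurableSet_le measurable_const (by fun_prop)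
  have hm3 : MeasurableSet E3 := measurableSet_le measurable_const (by fun_prop)
  have hm : MeasurableSet (E1 ∪ E2 ∪ E3) := (hm1.union hm2).union hm3
  have hE : ((stdGaussian n).prod (stdGaussian n)) (E1 ∪ E2 ∪ E3) ≤
      ENNReal.ofReal (6 * C0 / (n * (T * δ) ^ 2)) + ENNReal.ofReal (6 * C0 / n) +
        ENNReal.ofReal (2 * C0 / (n * δ ^ 2)) := by
    refine (measure_union_le _ _).trans (add_le_add ((measure_union_le _ _).trans
      (add_le_add h1 h2)) h3)
  rw [Measure.prod_apply hm] at hE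
  have hmk := mul_meas_ge_le_lintegral (μ := stdGaussian n)
    (measurable_measure_prodMk_left (ν := stdGaussian n) hm) (1 / 2)
  have hfin : stdGaussian n {w | ENNReal.ofReal (Real.exp (r + n * δ)) *
      stdGaussian n (Bset lam σ D w) < 1 / 2} ≤
      stdGaussian n {w | 1 / 2 ≤ stdGaussian n (Prod.mk w ⁻¹' (E1 ∪ E2 ∪ E3))} := by
    apply measure_mono
    intro w hw
    rw [Set.mem_ofPred_eq] at hw ⊢
    have hcm := change_measure (fun i => a i * w i / σ) c hc0 (Bset lam σ D w) (Bset_meas _ _ _ _)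
      (r + n * δ)
    have hlt := lt_of_le_of_lt hcm hw
    have hcompl : (Prod.mk w ⁻¹' (E1 ∪ E2 ∪ E3))ᶜ ⊆ {z | (fun i => a i * w i / σ + c i * z i) ∈
        Bset lam σ D w ∧ ∑ i, (-Real.log (c i) - z i ^ 2 / 2 +
          (a i * w i / σ + c i * z i) ^ 2 / 2) ≤ r + n * δ} := by
      intro z hz
      simp only [Set.preimage_union, Set.mem_compl_iff, Set.mem_union, Set.mem_preimage, hE1, hE2,
        hE3, Set.mem_ofPred_eq, not_or, not_le] at hz
      have e : ∀ i, w i - σ * (a i * w i / σ + c i * z i) = (1 - a i) * w i - σ * c i * z i := by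
        intro i; field_simp; ring
      refine ⟨⟨?_, ?_⟩, hz.2.le⟩
      · simp only [e]; exact hz.1.1.le
      · simp only [e]; exact hz.1.2.le
    have hlt2 := lt_of_le_of_lt (measure_mono hcompl) hlt
    by_contra hcon
    rw [not_le] at hcon
    have hone : stdGaussian n (Prod.mk w ⁻¹' (E1 ∪ E2 ∪ E3)) +
        stdGaussian n (Prod.mk w ⁻¹' (E1 ∪ E2 ∪ E3))ᶜ = 1 := by
      rw [measure_add_measure_compl (measurable_prodMk_left hm), measure_univ]
    have := ENNReal.add_lt_add hcon hlt2
    rw [hone, ENNReal.add_halves] at this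
    exact lt_irrefl _ this
  refine hfin.trans ?_
  have h4 : (2 : ENNReal) * (1 / 2) = 1 := by
    rw [one_div, ENNReal.mul_inv_cancel (by norm_num) (by norm_num)]
  calc _ = 2 * (1 / 2 * stdGaussian n {w | 1 / 2 ≤ stdGaussian n (Prod.mk w ⁻¹' (E1 ∪ E2 ∪ E3))}) := by
        rw [← mul_assoc, h4, one_mul]
    _ ≤ _ := by gcongr; exact hmk.trans hE

lemma exists_T {n : ℕ} (hn : 0 < n) (lam : Fin n → ℝ) (hl : ∀ i, 0 ≤ lam i) (hs : ∑ i, lam i = n)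
    (R : ℝ) (hR : 0 < R) : 0 < Trc lam R ∧ Rrc lam (Trc lam R) = R := by
  have hn' : (0 : ℝ) < n := by exact_mod_cast hn
  apply Classical.epsilon_spec (p := fun T => 0 < T ∧ Rrc lam T = R)
  obtain ⟨i, hi⟩ : ∃ i, 0 < lam i := by
    by_contra h
    push Not at h
    have : ∑ i, lam i ≤ 0 := Finset.sum_nonpos fun i _ => h i
    linarith
  set T1 : ℝ := (2 : ℝ) ^ (2 * n * R) / lam i with hT1
  have hT1p : 0 < T1 := by positivity
  have hcont : ContinuousOn (Rrc lam) (Set.Icc 0 T1) := by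
    unfold Rrc
    refine ContinuousOn.mul continuousOn_const (continuousOn_finsetSum _ fun j _ => ?_)
    unfold Real.logb
    refine ContinuousOn.div_const (ContinuousOn.log (by fun_prop) ?_) _
    intro x hx
    have := mul_nonneg (hl j) hx.1
    positivity
  have h0 : Rrc lam 0 = 0 := by simp [Rrc]
  have h1 : R ≤ Rrc lam T1 := by
    unfold Rrc
    have hb : 2 * n * R ≤ Real.logb 2 (1 + lam i * T1) := by
      rw [Real.le_logb_iff_rpow_le (by norm_num) (by positivity), hT1]
      have : lam i * ((2 : ℝ) ^ (2 * n * R) / lam i) = (2 : ℝ) ^ (2 * n * R) := by field_simp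
      linarith
    have hsum : Real.logb 2 (1 + lam i * T1) ≤ ∑ j, Real.logb 2 (1 + lam j * T1) :=
      Finset.single_le_sum (f := fun j => Real.logb 2 (1 + lam j * T1))
        (fun j _ => Real.logb_nonneg (by norm_num) (by nlinarith [mul_nonneg (hl j) hT1p.le]))
        (Finset.mem_univ i)
    rw [one_div_mul_eq_div, le_div_iff₀ (by positivity)]
    linarith
  obtain ⟨T, hT, hTR⟩ := intermediate_value_Icc hT1p.le hcont ⟨by rw [h0]; exact hR.le, h1⟩
  refine ⟨T, lt_of_le_of_ne hT.1 ?_, hTR⟩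
  rintro rfl
  rw [h0] at hTR
  exact hR.ne hTR

lemma T_lower {n : ℕ} (hn : 0 < n) (lam : Fin n → ℝ) (hl : ∀ i, 0 ≤ lam i) (hs : ∑ i, lam i = n)
    (R T : ℝ) (hT : 0 < T) (hR : Rrc lam T = R) : 2 * R * Real.log 2 ≤ T := by
  have hn' : (0 : ℝ) < n := by exact_mod_cast hn
  have h2 : 0 < Real.log 2 := Real.log_pos (by norm_num)
  unfold Rrc at hR
  have h : ∑ i, Real.logb 2 (1 + lam i * T) ≤ ∑ i, lam i * T / Real.log 2 := by
    refine Finset.sum_le_sum fun i _ => ?_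
    unfold Real.logb
    have := mul_nonneg (hl i) hT.le
    gcongr
    have := Real.log_le_sub_one_of_pos (x := 1 + lam i * T) (by positivity)
    linarith
  rw [← Finset.sum_div, ← Finset.sum_mul, hs] at h
  have : ∑ i, Real.logb 2 (1 + lam i * T) = 2 * n * R := by
    rw [← hR, ← mul_assoc, mul_one_div_cancel (by positivity), one_mul]
  rw [this, le_div_iff₀ h2] at h
  have h3 : n * (2 * R * Real.log 2) ≤ n * T := by linarith
  exact le_of_mul_le_mul_left h3 hn'

/-- The covering statement in the eigenbasis, with scale in the grid `√(k/K)`. -/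
lemma cover_diag {n : ℕ} (hn : 0 < n) (lam : Fin n → ℝ) (hl : ∀ i, 0 ≤ lam i)
    (hs : ∑ i, lam i = n) (R : ℝ) (hR : 0 < R) (K : ℕ) (hK : 0 < K) (δ : ℝ) (hδ : 0 < δ)
    (T0 : ℝ) (hT0 : T0 = 2 * R * Real.log 2) :
    ∃ k : Fin K, stdGaussian n {w | ENNReal.ofReal (Real.exp (n * (R * Real.log 2 + δ))) *
      stdGaussian n (Bset lam (√(((k : ℕ) + 1) / (K : ℝ)))
        (DDrc lam R + 1 / (K * T0) + δ) w) < 1 / 2} ≤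
      2 * (ENNReal.ofReal (6 * C0 / (n * (T0 * δ) ^ 2)) + ENNReal.ofReal (6 * C0 / n) +
        ENNReal.ofReal (2 * C0 / (n * δ ^ 2))) := by
  have hn' : (0 : ℝ) < n := by exact_mod_cast hn
  have hK' : (0 : ℝ) < K := by exact_mod_cast hK
  have h2 : 0 < Real.log 2 := Real.log_pos (by norm_num)
  have hT0p : 0 < T0 := by rw [hT0]; positivity
  obtain ⟨hT, hTR⟩ := exists_T hn lam hl hs R hR
  unfold DDrc
  set T := Trc lam R
  have hTT : T0 ≤ T := hT0 ▸ T_lower hn lam hl hs R T hT hTR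
  have hlT : ∀ i, 0 ≤ lam i * T := fun i => mul_nonneg (hl i) hT.le
  set a : Fin n → ℝ := fun i => lam i * T / (1 + lam i * T) with ha
  have h1a : ∀ i, 1 - a i = 1 / (1 + lam i * T) := fun i => by
    have := hlT i
    simp only [ha]
    field_simp
    ring
  have ha0 : ∀ i, 0 ≤ a i := fun i => by have := hlT i; simp only [ha]; positivity
  have hpos : ∀ i, 0 < 1 - a i := fun i => by rw [h1a]; have := hlT i; positivity
  have ha1 : ∀ i, a i < 1 := fun i => by linarith [hpos i]
  have hA : 0 < ∑ i, a i := by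
    obtain ⟨i, hi⟩ : ∃ i, 0 < lam i := by
      by_contra h
      push Not at h
      have : ∑ i, lam i ≤ 0 := Finset.sum_nonpos fun i _ => h i
      linarith
    refine Finset.sum_pos' (fun i _ => ha0 i) ⟨i, Finset.mem_univ i, ?_⟩
    simp only [ha]; positivity
  set s := (∑ i, a i ^ 2) / ∑ i, a i with hsdef
  have hs_pos : 0 < s := by
    apply div_pos _ hA
    obtain ⟨i, _, hi⟩ := Finset.exists_lt_of_sum_lt (s := Finset.univ) (f := fun _ : Fin n => (0:ℝ))
      (g := a) (by simpa using hA)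
    exact Finset.sum_pos' (fun i _ => sq_nonneg _) ⟨i, Finset.mem_univ i, pow_pos hi 2⟩
  have hs_le : s ≤ 1 := by
    rw [hsdef, div_le_one hA]
    exact Finset.sum_le_sum fun i _ => by nlinarith [ha0 i, ha1 i]
  have hsA : s * ∑ i, a i = ∑ i, a i ^ 2 := by rw [hsdef]; field_simp
  have hAn : ∑ i, a i ≤ n := by
    have := Finset.sum_le_sum (s := Finset.univ) fun i _ => (ha1 i).le
    simpa using this
  -- the grid point
  set m := ⌈s * K⌉₊ with hm
  have hm0 : 0 < m := Nat.ceil_pos.2 (by positivity)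
  have hmK : m ≤ K := Nat.ceil_le.2 (by nlinarith)
  refine ⟨⟨m - 1, by omega⟩, ?_⟩
  have hcast : (((⟨m - 1, by omega⟩ : Fin K) : ℕ) : ℝ) + 1 = m := by
    have : m - 1 + 1 = m := by omega
    exact_mod_cast this
  rw [hcast]
  have hm1 : s * K ≤ m := Nat.le_ceil _
  have hm2 : (m : ℝ) < s * K + 1 := Nat.ceil_lt_add_one (by positivity)
  have hmpos : (0 : ℝ) < m := by exact_mod_cast hm0
  have hsq : √((m : ℝ) / K) ^ 2 = m / K := Real.sq_sqrt (by positivity)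
  set σ := √((m : ℝ) / K) with hσ
  have hσ0 : 0 < σ := Real.sqrt_pos.2 (by positivity)
  have hσ1 : σ ≤ 1 := by
    refine Real.sqrt_le_one.2 ?_
    rw [div_le_one hK']
    exact_mod_cast hmK
  set c : Fin n → ℝ := fun i => √(1 - a i) with hcdef
  have hc0 : ∀ i, 0 < c i := fun i => Real.sqrt_pos.2 (hpos i)
  have hc : ∀ i, c i ^ 2 = 1 - a i := fun i => Real.sq_sqrt (hpos i).le
  have hlam : ∀ i, lam i * (1 - a i) = a i / T := fun i => by
    rw [h1a]; simp only [ha]; field_simp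
  have hs1 : ∑ i, a i ^ 2 ≤ σ ^ 2 * ∑ i, a i := by
    rw [hsq, ← hsA]
    gcongr
    rw [le_div_iff₀ hK']; exact hm1
  have hs2 : σ ^ 2 * ∑ i, a i ≤ ∑ i, a i ^ 2 + n * (1 / K) := by
    rw [hsq, ← hsA]
    have : (m : ℝ) / K ≤ s + 1 / K := by
      rw [div_le_iff₀ hK']; field_simp; linarith
    calc (m : ℝ) / K * ∑ i, a i ≤ (s + 1 / K) * ∑ i, a i := by gcongr
      _ = s * ∑ i, a i + (∑ i, a i) * (1 / K) := by ring
      _ ≤ _ := by gcongr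
  have hr : ∑ i, (-Real.log (c i)) = n * (R * Real.log 2) := by
    have h : ∀ i, -Real.log (c i) = Real.logb 2 (1 + lam i * T) * (Real.log 2 / 2) := fun i => by
      simp only [hcdef]
      rw [Real.log_sqrt (hpos i).le, h1a, one_div, Real.log_inv, Real.logb]
      field_simp
    rw [Finset.sum_congr rfl fun i _ => h i, ← Finset.sum_mul]
    have : ∑ i, Real.logb 2 (1 + lam i * T) = 2 * n * R := by
      rw [← hTR]; unfold Rrc
      rw [← mul_assoc, mul_one_div_cancel (by positivity), one_mul]
    rw [this]; ring
  have key := cover_abs hn lam a c T σ (1 / K) δ _ hT hσ0 hσ1 ha0 ha1 hlam hc0 hc hs1 hs2 hr hδ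
  have hD : (1 / (n : ℝ)) * ∑ i, a i / T + 1 / K / T + δ ≤ Drc lam T + 1 / (K * T0) + δ := by
    unfold Drc
    have h : ∀ i, a i / T = lam i / (1 + lam i * T) := fun i => by simp only [ha]; field_simp
    rw [Finset.sum_congr rfl fun i _ => h i, div_div]
    gcongr
  have hBsub : ∀ w, Bset lam σ ((1 / (n : ℝ)) * ∑ i, a i / T + 1 / K / T + δ) w ⊆
      Bset lam σ (Drc lam T + 1 / (K * T0) + δ) w := fun w x hx =>
    ⟨hx.1.trans (by gcongr), hx.2⟩
  refine le_trans (measure_mono ?_) (key.trans ?_)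
  · intro w hw
    rw [Set.mem_ofPred_eq] at hw ⊢
    refine lt_of_le_of_lt ?_ hw
    rw [← mul_add]
    gcongr
    exact hBsub w
  · gcongr
    linarith [C0_pos]

/-- admissible data: a PSD matrix of trace `n` with a spectral decomposition -/
structure Adm {n : ℕ} (Sig U : Matrix (Fin n) (Fin n) ℝ) (lam : Fin n → ℝ) : Prop where
  psd : Sig.PosSemidef
  tr : Sig.trace = (n : ℝ)
  orth : U * Uᵀ = 1
  eq : Sig = U * Matrix.diagonal lam * Uᵀ

lemma Adm.orth' {n : ℕ} {Sig U : Matrix (Fin n) (Fin n) ℝ} {lam : Fin n → ℝ}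
    (h : Adm Sig U lam) : Uᵀ * U = 1 := mul_eq_one_comm.1 h.orth

lemma Adm.quad {n : ℕ} {Sig U : Matrix (Fin n) (Fin n) ℝ} {lam : Fin n → ℝ}
    (h : Adm Sig U lam) (v : Fin n → ℝ) : v ⬝ᵥ Sig *ᵥ v = ∑ i, lam i * ((Uᵀ *ᵥ v) i) ^ 2 := by
  rw [h.eq, ← Matrix.mulVec_mulVec, ← Matrix.mulVec_mulVec, Matrix.dotProduct_mulVec,
    ← Matrix.mulVec_transpose, dotProduct]
  refine Finset.sum_congr rfl fun i _ => ?_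
  rw [Matrix.mulVec_diagonal]
  ring

lemma Adm.nonneg {n : ℕ} {Sig U : Matrix (Fin n) (Fin n) ℝ} {lam : Fin n → ℝ}
    (h : Adm Sig U lam) (i : Fin n) : 0 ≤ lam i := by
  have h1 := h.psd.dotProduct_mulVec_nonneg (U *ᵥ Pi.single i 1)
  rw [star_trivial, h.quad] at h1
  simp only [Matrix.mulVec_mulVec, h.orth', Matrix.one_mulVec] at h1
  simpa [Pi.single_apply] using h1

lemma Adm.sum {n : ℕ} {Sig U : Matrix (Fin n) (Fin n) ℝ} {lam : Fin n → ℝ}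
    (h : Adm Sig U lam) : ∑ i, lam i = n := by
  rw [← h.tr, h.eq, Matrix.trace_mul_comm, ← mul_assoc, h.orth', one_mul, Matrix.trace_diagonal]

lemma Adm.entry {n : ℕ} {Sig U : Matrix (Fin n) (Fin n) ℝ} {lam : Fin n → ℝ}
    (h : Adm Sig U lam) (i j : Fin n) : |Sig i j| ≤ n := by
  have hU : ∀ i k, |U i k| ≤ 1 := fun i k => by
    have h1 : ∑ k, U i k * U i k = 1 := by
      have := congrFun (congrFun h.orth i) i
      simpa [Matrix.mul_apply] using this
    have h2 : U i k * U i k ≤ 1 := by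
      rw [← h1]
      exact Finset.single_le_sum (f := fun k => U i k * U i k) (fun k _ => mul_self_nonneg _)
        (Finset.mem_univ k)
    rw [← sq_le_one_iff_abs_le_one]
    nlinarith
  have he : Sig i j = ∑ k, U i k * lam k * U j k := by
    rw [h.eq, Matrix.mul_apply]
    simp [Matrix.mul_diagonal]
  rw [he, ← h.sum]
  refine (Finset.abs_sum_le_sum_abs _ _).trans (Finset.sum_le_sum fun k _ => ?_)
  rw [abs_mul, abs_mul, abs_of_nonneg (h.nonneg k)]
  have := h.nonneg k
  calc |U i k| * lam k * |U j k| ≤ 1 * lam k * 1 := by gcongr <;> apply hU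
    _ = lam k := by ring

/-- covering relation in the original coordinates: pairs (source word, base codeword) -/
def Srel {n : ℕ} (Sig : Matrix (Fin n) (Fin n) ℝ) (σ D : ℝ) : Set ((Fin n → ℝ) × (Fin n → ℝ)) :=
  {p | dSig Sig p.1 (σ • p.2) ≤ n * D ∧ (p.1 - σ • p.2) ⬝ᵥ (p.1 - σ • p.2) ≤ 3 * n}

lemma Srel_meas {n : ℕ} (Sig : Matrix (Fin n) (Fin n) ℝ) (σ D : ℝ) :
    MeasurableSet (Srel Sig σ D) := by
  have h1 : MeasurableSet {p : (Fin n → ℝ) × (Fin n → ℝ) | dSig Sig p.1 (σ • p.2) ≤ n * D} := by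
    refine measurableSet_le (Continuous.measurable ?_) measurable_const
    unfold dSig
    fun_prop
  have h2 : MeasurableSet {p : (Fin n → ℝ) × (Fin n → ℝ) |
      (p.1 - σ • p.2) ⬝ᵥ (p.1 - σ • p.2) ≤ 3 * n} := by
    refine measurableSet_le (Continuous.measurable ?_) measurable_const
    fun_prop
  exact h1.inter h2

lemma Srel_diag {n : ℕ} (Sig U : Matrix (Fin n) (Fin n) ℝ) (lam : Fin n → ℝ)
    (h : Adm Sig U lam) (σ D : ℝ) (w : Fin n → ℝ) :
    stdGaussian n (Prod.mk w ⁻¹' Srel Sig σ D) =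
      stdGaussian n (Bset lam σ D (Uᵀ *ᵥ w)) := by
  have hmp := mp_orth Uᵀ (by rw [Matrix.transpose_transpose]; exact h.orth')
  rw [← hmp.measure_preimage (Bset_meas _ _ _ _).nullMeasurableSet]
  congr 1
  ext x
  have hd : ∀ i, (Uᵀ *ᵥ (w - σ • x)) i = (Uᵀ *ᵥ w) i - σ * (Uᵀ *ᵥ x) i := fun i => by
    rw [Matrix.mulVec_sub, Matrix.mulVec_smul]; rfl
  have hq : dSig Sig w (σ • x) = ∑ i, lam i * ((Uᵀ *ᵥ w) i - σ * (Uᵀ *ᵥ x) i) ^ 2 := by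
    unfold dSig
    rw [h.quad]
    simp only [hd]
  have hn : (w - σ • x) ⬝ᵥ (w - σ • x) = ∑ i, ((Uᵀ *ᵥ w) i - σ * (Uᵀ *ᵥ x) i) ^ 2 := by
    have : (Uᵀ *ᵥ (w - σ • x)) ⬝ᵥ (Uᵀ *ᵥ (w - σ • x)) = (w - σ • x) ⬝ᵥ (w - σ • x) := by
      rw [Matrix.dotProduct_mulVec, ← Matrix.mulVec_transpose, Matrix.mulVec_mulVec,
        Matrix.transpose_transpose, h.orth, Matrix.one_mulVec]
    rw [← this, dotProduct]
    refine Finset.sum_congr rfl fun i _ => ?_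
    rw [hd]; ring
  simp only [Set.mem_preimage, Srel, Bset, Set.mem_ofPred_eq, hq, hn]

/-- typical source words -/
def Typ {n : ℕ} (ρ : ℝ) (S : Set ((Fin n → ℝ) × (Fin n → ℝ))) : Set (Fin n → ℝ) :=
  {w | 1 / 2 ≤ ENNReal.ofReal (Real.exp ρ) * stdGaussian n (Prod.mk w ⁻¹' S)}

lemma Typ_meas {n : ℕ} (ρ : ℝ) (S : Set ((Fin n → ℝ) × (Fin n → ℝ))) (hS : MeasurableSet S) :
    MeasurableSet (Typ ρ S) :=
  measurableSet_le measurable_const ((measurable_measure_prodMk_left hS).const_mul _)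

lemma Bset_meas2 {n : ℕ} (lam : Fin n → ℝ) (σ D : ℝ) :
    Measurable (fun w => stdGaussian n (Bset lam σ D w)) := by
  have h : MeasurableSet {p : (Fin n → ℝ) × (Fin n → ℝ) | p.2 ∈ Bset lam σ D p.1} := by
    have h1 : MeasurableSet {p : (Fin n → ℝ) × (Fin n → ℝ) |
        ∑ i, lam i * (p.1 i - σ * p.2 i) ^ 2 ≤ n * D} :=
      measurableSet_le (by fun_prop) measurable_const
    have h2 : MeasurableSet {p : (Fin n → ℝ) × (Fin n → ℝ) |
        ∑ i, (p.1 i - σ * p.2 i) ^ 2 ≤ 3 * n} :=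
      measurableSet_le (by fun_prop) measurable_const
    exact h1.inter h2
  exact measurable_measure_prodMk_left h

lemma cover_rot {n : ℕ} (hn : 0 < n) (Sig U : Matrix (Fin n) (Fin n) ℝ) (lam : Fin n → ℝ)
    (h : Adm Sig U lam) (R : ℝ) (hR : 0 < R) (K : ℕ) (hK : 0 < K) (δ : ℝ) (hδ : 0 < δ)
    (T0 : ℝ) (hT0 : T0 = 2 * R * Real.log 2) :
    ∃ k : Fin K, stdGaussian n (Typ (n * (R * Real.log 2 + δ))
        (Srel Sig (√(((k : ℕ) + 1) / (K : ℝ))) (DDrc lam R + 1 / (K * T0) + δ)))ᶜ ≤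
      2 * (ENNReal.ofReal (6 * C0 / (n * (T0 * δ) ^ 2)) + ENNReal.ofReal (6 * C0 / n) +
        ENNReal.ofReal (2 * C0 / (n * δ ^ 2))) := by
  obtain ⟨k, hk⟩ := cover_diag hn lam h.nonneg h.sum R hR K hK δ hδ T0 hT0
  refine ⟨k, le_trans (le_of_eq ?_) hk⟩
  have hmp := mp_orth Uᵀ (by rw [Matrix.transpose_transpose]; exact h.orth')
  have hm : MeasurableSet {w : Fin n → ℝ |
      ENNReal.ofReal (Real.exp (n * (R * Real.log 2 + δ))) *
      stdGaussian n (Bset lam (√(((k : ℕ) + 1) / (K : ℝ)))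
        (DDrc lam R + 1 / (K * T0) + δ) w) < 1 / 2} :=
    measurableSet_lt ((Bset_meas2 _ _ _).const_mul _) measurable_const
  rw [← hmp.measure_preimage hm.nullMeasurableSet]
  congr 1
  ext w
  simp only [Typ, Set.mem_compl_iff, Set.mem_ofPred_eq, Set.mem_preimage, not_le,
    Srel_diag Sig U lam h]

lemma fourth_bound {n : ℕ} (hn : 0 < n) (Sig U : Matrix (Fin n) (Fin n) ℝ) (lam : Fin n → ℝ)
    (h : Adm Sig U lam) : ∃ Y : (Fin n → ℝ) → ℝ, Integrable Y (stdGaussian n) ∧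
      ∫ w, Y w ∂(stdGaussian n) = mom4 ∧ ∀ w, (1 / (n : ℝ) * dSig Sig w 0) ^ 2 ≤ Y w := by
  have hn' : (0 : ℝ) < n := by exact_mod_cast hn
  have hmp := mp_orth Uᵀ (by rw [Matrix.transpose_transpose]; exact h.orth')
  set Z : (Fin n → ℝ) → ℝ := fun w => ∑ i, lam i / n * (w i) ^ 4 with hZ
  have hi : ∀ i, Integrable (fun w : Fin n → ℝ => lam i / n * (w i) ^ 4) (stdGaussian n) :=
    fun i => (integrable_comp_eval (μ := fun _ : Fin n => gaussianReal 0 1) (i := i)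
      (int_pow 4)).const_mul _
  have hZi : Integrable Z (stdGaussian n) := integrable_finsetSum _ fun i _ => hi i
  have hZv : ∫ w, Z w ∂(stdGaussian n) = mom4 := by
    simp only [hZ]
    rw [integral_finsetSum _ fun i _ => hi i]
    have : ∀ i, ∫ w : Fin n → ℝ, lam i / n * (w i) ^ 4 ∂(stdGaussian n) = lam i / n * mom4 := by
      intro i
      rw [integral_const_mul]
      congr 1
      exact integral_comp_eval (μ := fun _ : Fin n => gaussianReal 0 1) (i := i)
        (int_pow 4).aestronglyMeasurable
    rw [Finset.sum_congr rfl fun i _ => this i, ← Finset.sum_mul, ← Finset.sum_div, h.sum,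
      div_self hn'.ne', one_mul]
  refine ⟨fun w => Z (Uᵀ *ᵥ w), hmp.integrable_comp_of_integrable hZi, ?_, fun w => ?_⟩
  · rw [← hZv]
    conv_rhs => rw [← hmp.map_eq]
    rw [integral_map hmp.measurable.aemeasurable]
    rw [hmp.map_eq]; exact hZi.aestronglyMeasurable
  · have h1 : 1 / (n : ℝ) * dSig Sig w 0 = ∑ i, lam i / n * ((Uᵀ *ᵥ w) i) ^ 2 := by
      unfold dSig
      rw [sub_zero, h.quad, Finset.mul_sum]
      refine Finset.sum_congr rfl fun i _ => by ring
    rw [h1]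
    have hp := Real.pow_arith_mean_le_arith_mean_pow Finset.univ (fun i => lam i / (n : ℝ))
      (fun i => ((Uᵀ *ᵥ w) i) ^ 2) (fun i _ => div_nonneg (h.nonneg i) hn'.le)
      (by rw [← Finset.sum_div, h.sum, div_self hn'.ne']) (fun i _ => sq_nonneg _) 2
    refine hp.trans (le_of_eq ?_)
    simp only [hZ]
    refine Finset.sum_congr rfl fun i _ => by ring

lemma random_code {n : ℕ} {ι : Type} [Fintype ι] (S : ι → Set ((Fin n → ℝ) × (Fin n → ℝ)))
    (hS : ∀ i, MeasurableSet (S i)) (ρ : ℝ) (M : ℕ) :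
    ∃ C : Fin M → Fin n → ℝ, ∀ i, stdGaussian n {w | w ∈ Typ ρ (S i) ∧ ∀ j, (w, C j) ∉ S i} ≤
      ENNReal.ofReal (Fintype.card ι * Real.exp (-(M * (Real.exp (-ρ) / 2)))) := by
  set P : Measure (Fin M → Fin n → ℝ) := Measure.pi fun _ => stdGaussian n with hP
  set E : ι → Set ((Fin M → Fin n → ℝ) × (Fin n → ℝ)) := fun i =>
    {p | p.2 ∈ Typ ρ (S i) ∧ ∀ j, (p.2, p.1 j) ∉ S i} with hE
  have hEm : ∀ i, MeasurableSet (E i) := fun i => by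
    have h1 : MeasurableSet {p : (Fin M → Fin n → ℝ) × (Fin n → ℝ) | p.2 ∈ Typ ρ (S i)} :=
      measurable_snd (Typ_meas ρ (S i) (hS i))
    have h2 : MeasurableSet (⋂ j, {p : (Fin M → Fin n → ℝ) × (Fin n → ℝ) | (p.2, p.1 j) ∉ S i}) :=
      MeasurableSet.iInter fun j => by
        have hf : Measurable (fun p : (Fin M → Fin n → ℝ) × (Fin n → ℝ) => (p.2, p.1 j)) := by
          fun_prop
        exact hf (hS i).compl
    convert h1.inter h2 using 1
    ext p
    simp [hE]
  have hbound : ∀ i, ∫⁻ C, stdGaussian n (Prod.mk C ⁻¹' E i) ∂P ≤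
      ENNReal.ofReal (Real.exp (-(M * (Real.exp (-ρ) / 2)))) := fun i => by
    rw [← Measure.prod_apply (hEm i), Measure.prod_apply_symm (hEm i)]
    calc _ ≤ ∫⁻ w, ENNReal.ofReal (Real.exp (-(M * (Real.exp (-ρ) / 2)))) ∂(stdGaussian n) := by
          refine lintegral_mono fun w => ?_
          by_cases hw : w ∈ Typ ρ (S i)
          · have hset : (fun C : Fin M → Fin n → ℝ => (C, w)) ⁻¹' E i =
                Set.univ.pi fun _ => (Prod.mk w ⁻¹' S i)ᶜ := by
              ext C
              simp [hE, hw]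
            rw [hset, hP, Measure.pi_pi]
            have hq : (stdGaussian n).real (Prod.mk w ⁻¹' S i) ≥ Real.exp (-ρ) / 2 := by
              have h1 : 1 / 2 ≤ ENNReal.ofReal (Real.exp ρ) * stdGaussian n (Prod.mk w ⁻¹' S i) := hw
              have h2 := ENNReal.toReal_mono (by finiteness) h1
              rw [ENNReal.toReal_mul, ENNReal.toReal_ofReal (Real.exp_pos _).le] at h2
              have h3 : Real.exp (-ρ) * Real.exp ρ = 1 := by rw [← Real.exp_add]; simp
              have h4 : (1 / 2 : ℝ) ≤ Real.exp ρ * (stdGaussian n).real (Prod.mk w ⁻¹' S i) := by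
                simpa [Measure.real] using h2
              have h5 := mul_le_mul_of_nonneg_left h4 (Real.exp_pos (-ρ)).le
              rw [← mul_assoc, h3] at h5
              linarith
            have hc : (stdGaussian n).real (Prod.mk w ⁻¹' S i)ᶜ ≤ Real.exp (-(Real.exp (-ρ) / 2)) := by
              rw [measureReal_compl (measurable_prodMk_left (hS i)), probReal_univ]
              have := Real.add_one_le_exp (-(Real.exp (-ρ) / 2))
              linarith
            rw [Finset.prod_const, Finset.card_univ, Fintype.card_fin,
              ← ofReal_measureReal (μ := stdGaussian n), ← ENNReal.ofReal_pow measureReal_nonneg]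
            refine ENNReal.ofReal_le_ofReal ?_
            calc _ ≤ Real.exp (-(Real.exp (-ρ) / 2)) ^ M := by gcongr
              _ = _ := by rw [← Real.exp_nat_mul]; congr 1; ring
          · have hset : (fun C : Fin M → Fin n → ℝ => (C, w)) ⁻¹' E i = ∅ := by
              ext C
              simp [hE, hw]
            rw [hset, measure_empty]
            exact zero_le
      _ = _ := by simp
  have hsum : ∫⁻ C, ∑ i, stdGaussian n (Prod.mk C ⁻¹' E i) ∂P ≤
      ENNReal.ofReal (Fintype.card ι * Real.exp (-(M * (Real.exp (-ρ) / 2)))) := by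
    rw [lintegral_finsetSum _ fun i _ => measurable_measure_prodMk_left (hEm i)]
    refine (Finset.sum_le_sum fun i _ => hbound i).trans (le_of_eq ?_)
    rw [Finset.sum_const, Finset.card_univ, nsmul_eq_mul, ENNReal.ofReal_mul (by positivity)]
    simp
  obtain ⟨C, hC⟩ := exists_le_lintegral (μ := P)
    (f := fun C => ∑ i, stdGaussian n (Prod.mk C ⁻¹' E i))
    (Finset.measurable_sum _ fun i _ => measurable_measure_prodMk_left (hEm i)).aemeasurable
  refine ⟨C, fun i => ?_⟩
  refine le_trans ?_ (hC.trans hsum)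
  exact Finset.single_le_sum (f := fun i => stdGaussian n (Prod.mk C ⁻¹' E i))
    (fun _ _ => zero_le) (Finset.mem_univ i)

lemma quad_pert {n : ℕ} (A B : Matrix (Fin n) (Fin n) ℝ) (e : ℝ)
    (h : ∀ i j, |A i j - B i j| ≤ e) (v : Fin n → ℝ) :
    v ⬝ᵥ A *ᵥ v ≤ v ⬝ᵥ B *ᵥ v + e * (n * (v ⬝ᵥ v)) := by
  have h0 : ∀ C : Matrix (Fin n) (Fin n) ℝ, v ⬝ᵥ C *ᵥ v = ∑ i, ∑ j, v i * v j * C i j := by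
    intro C
    simp only [dotProduct, Matrix.mulVec, Finset.mul_sum]
    refine Finset.sum_congr rfl fun i _ => Finset.sum_congr rfl fun j _ => by ring
  have h1 : (n * (v ⬝ᵥ v) : ℝ) = ∑ i : Fin n, ∑ j : Fin n, (v i ^ 2 + v j ^ 2) / 2 := by
    simp only [← Finset.sum_div, Finset.sum_add_distrib, Finset.sum_const, Finset.card_univ,
      Fintype.card_fin, nsmul_eq_mul, ← Finset.mul_sum, dotProduct]
    simp only [← pow_two]
    ring
  rw [h0, h0, h1, Finset.mul_sum, ← Finset.sum_add_distrib]
  refine Finset.sum_le_sum fun i _ => ?_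
  rw [Finset.mul_sum, ← Finset.sum_add_distrib]
  refine Finset.sum_le_sum fun j _ => ?_
  have h2 := h i j
  have he : 0 ≤ e := (abs_nonneg _).trans h2
  have h3 : v i * v j * (A i j - B i j) ≤ |v i * v j| * e := by
    refine (le_abs_self _).trans ?_
    rw [abs_mul]
    gcongr
  have h4 : |v i * v j| ≤ (v i ^ 2 + v j ^ 2) / 2 := by
    rw [abs_le]
    constructor <;> nlinarith [sq_nonneg (v i + v j), sq_nonneg (v i - v j)]
  have h5 := mul_le_mul_of_nonneg_right h4 he
  linarith

lemma DDrc_mem {n : ℕ} (hn : 0 < n) (Sig U : Matrix (Fin n) (Fin n) ℝ) (lam : Fin n → ℝ)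
    (h : Adm Sig U lam) (R : ℝ) (hR : 0 < R) : 0 ≤ DDrc lam R ∧ DDrc lam R ≤ 1 := by
  have hn' : (0 : ℝ) < n := by exact_mod_cast hn
  obtain ⟨hT, -⟩ := exists_T hn lam h.nonneg h.sum R hR
  unfold DDrc Drc
  set T := Trc lam R
  have h1 : ∀ i, 0 ≤ lam i * T := fun i => mul_nonneg (h.nonneg i) hT.le
  constructor
  · refine mul_nonneg (by positivity) (Finset.sum_nonneg fun i _ => ?_)
    exact div_nonneg (h.nonneg i) (by linarith [h1 i])
  · have h2 : ∑ i, lam i / (1 + lam i * T) ≤ n := by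
      rw [← h.sum]
      refine Finset.sum_le_sum fun i _ => div_le_self (h.nonneg i) (by linarith [h1 i])
    calc _ ≤ 1 / (n : ℝ) * n := by gcongr
      _ = 1 := by field_simp

lemma exists_net_code {n : ℕ} (hn : 0 < n) (R : ℝ) (hR : 0 < R) (K : ℕ) (hK : 0 < K) (δ : ℝ)
    (hδ : 0 < δ) (T0 : ℝ) (hT0 : T0 = 2 * R * Real.log 2) (L : ℝ) (hL : 0 < L) (N : ℕ)
    (hN : 2 * (n : ℝ) * L < N) (K' : ℕ) (hK' : 0 < K') (M : ℕ) :
    ∃ C : Fin M → Fin n → ℝ, ∀ (Sig U : Matrix (Fin n) (Fin n) ℝ) (lam : Fin n → ℝ),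
      Adm Sig U lam → ∃ (k : Fin K) (bad : Set (Fin n → ℝ)), MeasurableSet bad ∧
        stdGaussian n bad ≤ 2 * (ENNReal.ofReal (6 * C0 / (n * (T0 * δ) ^ 2)) +
          ENNReal.ofReal (6 * C0 / n) + ENNReal.ofReal (2 * C0 / (n * δ ^ 2))) +
          ENNReal.ofReal (((N ^ n) ^ n * (K' + 1) : ℕ) * Real.exp (-(M *
            (Real.exp (-(n * (R * Real.log 2 + δ))) / 2)))) ∧
        ∀ w, w ∉ bad → ∃ j, 1 / (n : ℝ) * dSig Sig w (√(((k : ℕ) + 1) / (K : ℝ)) • C j) ≤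
          DDrc lam R + 1 / K' + 1 / (K * T0) + δ + 3 * n / L := by
  have hn' : (0 : ℝ) < n := by exact_mod_cast hn
  have hK'' : (0 : ℝ) < K' := by exact_mod_cast hK'
  set ρ : ℝ := n * (R * Real.log 2 + δ) with hρ
  set bd := 2 * (ENNReal.ofReal (6 * C0 / (n * (T0 * δ) ^ 2)) +
          ENNReal.ofReal (6 * C0 / n) + ENNReal.ofReal (2 * C0 / (n * δ ^ 2))) with hbd
  set Mat : (Fin n → Fin n → Fin N) × Fin (K' + 1) → Matrix (Fin n) (Fin n) ℝ → (Fin n → ℝ) → Prop :=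
    fun p Sig lam => (∀ i j, ((p.1 i j : ℕ) : ℝ) ≤ L * (Sig i j + n) ∧
      L * (Sig i j + n) < ((p.1 i j : ℕ) : ℝ) + 1) ∧
      ((p.2 : ℕ) : ℝ) ≤ K' * DDrc lam R ∧ K' * DDrc lam R < ((p.2 : ℕ) : ℝ) + 1 with hMat
  have hex : ∀ (Sig U : Matrix (Fin n) (Fin n) ℝ) (lam : Fin n → ℝ), Adm Sig U lam →
      ∃ p, Mat p Sig lam := by
    intro Sig U lam h
    have hnn : ∀ i j, 0 ≤ L * (Sig i j + n) := fun i j =>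
      mul_nonneg hL.le (by linarith [(abs_le.1 (h.entry i j)).1])
    obtain ⟨hd0, hd1⟩ := DDrc_mem hn Sig U lam h R hR
    refine ⟨⟨fun i j => ⟨⌊L * (Sig i j + n)⌋₊, ?_⟩, ⟨⌊K' * DDrc lam R⌋₊, ?_⟩⟩, fun i j => ⟨?_, ?_⟩, ?_, ?_⟩
    · rw [Nat.floor_lt (hnn i j)]
      have := (abs_le.1 (h.entry i j)).2
      nlinarith
    · rw [Nat.floor_lt (by positivity)]
      push_cast
      nlinarith
    · exact Nat.floor_le (hnn i j)
    · exact Nat.lt_floor_add_one _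
    · exact Nat.floor_le (by positivity)
    · exact Nat.lt_floor_add_one _
  have hrep : ∀ p, ∃ (S : Set ((Fin n → ℝ) × (Fin n → ℝ))) (k : Fin K), MeasurableSet S ∧
      ∀ (Sig U : Matrix (Fin n) (Fin n) ℝ) (lam : Fin n → ℝ), Adm Sig U lam → Mat p Sig lam →
        stdGaussian n (Typ ρ S)ᶜ ≤ bd ∧ ∀ w x, (w, x) ∈ S →
          1 / (n : ℝ) * dSig Sig w (√(((k : ℕ) + 1) / (K : ℝ)) • x) ≤
          DDrc lam R + 1 / K' + 1 / (K * T0) + δ + 3 * n / L := by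
    intro p
    by_cases hp : ∃ (Sig U : Matrix (Fin n) (Fin n) ℝ) (lam : Fin n → ℝ), Adm Sig U lam ∧ Mat p Sig lam
    · obtain ⟨Sig', U', lam', ha', hm'⟩ := hp
      obtain ⟨k, hk⟩ := cover_rot hn Sig' U' lam' ha' R hR K hK δ hδ T0 hT0
      refine ⟨_, k, Srel_meas _ _ _, fun Sig U lam ha hm => ⟨hk, fun w x hwx => ?_⟩⟩
      obtain ⟨h1, h2⟩ := hwx
      simp only at h1 h2
      set σ := √(((k : ℕ) + 1) / (K : ℝ))
      have hS : ∀ i j, |Sig i j - Sig' i j| ≤ 1 / L := fun i j => by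
        have q1 := hm.1 i j
        have q2 := hm'.1 i j
        have : L * |Sig i j - Sig' i j| ≤ 1 := by
          rw [← abs_of_pos hL, ← abs_mul, abs_le]
          constructor <;> nlinarith
        rw [le_div_iff₀ hL]
        linarith
      have hDD : DDrc lam' R ≤ DDrc lam R + 1 / K' := by
        have q1 := hm.2.1
        have q2 := hm'.2.2
        have : K' * DDrc lam' R ≤ K' * (DDrc lam R + 1 / K') := by
          rw [mul_add, mul_one_div_cancel hK''.ne']
          linarith
        exact le_of_mul_le_mul_left this hK''
      have h3 : dSig Sig w (σ • x) ≤ dSig Sig' w (σ • x) + 1 / L * (n * (3 * n)) := by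
        refine (quad_pert Sig Sig' (1 / L) hS _).trans ?_
        unfold dSig
        gcongr
      calc _ ≤ 1 / (n : ℝ) * (n * (DDrc lam' R + 1 / (K * T0) + δ) + 1 / L * (n * (3 * n))) := by
            gcongr
            linarith
        _ = DDrc lam' R + 1 / (K * T0) + δ + 3 * n / L := by
            field_simp
        _ ≤ _ := by linarith
    · refine ⟨∅, ⟨0, hK⟩, MeasurableSet.empty, fun Sig U lam ha hm => ?_⟩
      exact absurd ⟨Sig, U, lam, ha, hm⟩ hp
  choose S k hSm hS using hrep
  obtain ⟨C, hC⟩ := random_code S hSm ρ M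
  refine ⟨C, fun Sig U lam ha => ?_⟩
  obtain ⟨p, hp⟩ := hex Sig U lam ha
  obtain ⟨hb, hw⟩ := hS p Sig U lam ha hp
  refine ⟨k p, toMeasurable (stdGaussian n) ((Typ ρ (S p))ᶜ ∪ {w | w ∈ Typ ρ (S p) ∧ ∀ j, (w, C j) ∉ S p}),
    measurableSet_toMeasurable _ _, ?_, fun w hwb => ?_⟩
  · rw [measure_toMeasurable]
    refine (measure_union_le _ _).trans (add_le_add hb ((hC p).trans (le_of_eq ?_)))
    congr 3
    simp
  · have h1 : w ∉ (Typ ρ (S p))ᶜ ∪ {w | w ∈ Typ ρ (S p) ∧ ∀ j, (w, C j) ∉ S p} :=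
      fun hh => hwb (subset_toMeasurable _ _ hh)
    rw [Set.mem_union, not_or, Set.notMem_compl_iff, Set.mem_ofPred_eq, not_and] at h1
    have h2 := h1.2 h1.1
    push Not at h2
    obtain ⟨j, hj⟩ := h2
    exact ⟨j, hw w _ hj⟩

lemma code_int {n : ℕ} (hn : 0 < n) (Sig U : Matrix (Fin n) (Fin n) ℝ) (lam : Fin n → ℝ)
    (h : Adm Sig U lam) (bad : Set (Fin n → ℝ)) (hb : MeasurableSet bad) (D c P : ℝ) (hc : 0 < c)
    (hD : 0 ≤ D) (hP : (stdGaussian n).real bad ≤ P) (m : (Fin n → ℝ) → ℝ) (hm0 : ∀ w, 0 ≤ m w)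
    (hm1 : ∀ w, m w ≤ dSig Sig w 0) (hm2 : ∀ w, w ∉ bad → 1 / (n : ℝ) * m w ≤ D) :
    1 / (n : ℝ) * ∫ w, m w ∂(stdGaussian n) ≤ D + c / 2 * P + mom4 / (2 * c) := by
  have hn' : (0 : ℝ) < n := by exact_mod_cast hn
  obtain ⟨Y, hYi, hYv, hY⟩ := fourth_bound hn Sig U lam h
  rw [← integral_const_mul]
  have hi1 : Integrable (fun w => D + bad.indicator (fun _ => c / 2) w) (stdGaussian n) :=
    (integrable_const _).add ((integrable_const _).indicator hb)
  have hi : Integrable (fun w => D + bad.indicator (fun _ => c / 2) w + Y w * (1 / (2 * c)))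
      (stdGaussian n) := hi1.add (hYi.mul_const _)
  calc _ ≤ ∫ w, (D + bad.indicator (fun _ => c / 2) w + Y w * (1 / (2 * c))) ∂(stdGaussian n) := by
        refine integral_mono_of_nonneg (Filter.Eventually.of_forall fun w => ?_) hi
          (Filter.Eventually.of_forall fun w => ?_)
        · have := hm0 w
          simp only [Pi.zero_apply]
          positivity
        · simp only
          have hY0 : 0 ≤ Y w := (sq_nonneg _).trans (hY w)
          have hYc : 0 ≤ Y w * (1 / (2 * c)) := by positivity
          by_cases hw : w ∈ bad
          · rw [Set.indicator_of_mem hw]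
            set X := 1 / (n : ℝ) * dSig Sig w 0 with hX
            have h1 : 1 / (n : ℝ) * m w ≤ X := by
              rw [hX]
              have := hm1 w
              gcongr
            have h2 : X ≤ c / 2 + Y w * (1 / (2 * c)) := by
              have h3 : X ≤ c / 2 + X ^ 2 * (1 / (2 * c)) := by
                have h4 : c / 2 + X ^ 2 * (1 / (2 * c)) - X = (X - c) ^ 2 / (2 * c) := by
                  field_simp
                  ring
                have h5 : 0 ≤ (X - c) ^ 2 / (2 * c) := by positivity
                linarith
              refine h3.trans ?_
              have := hY w
              gcongr
            linarith
          · rw [Set.indicator_of_notMem hw]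
            have := hm2 w hw
            linarith
    _ = D + c / 2 * (stdGaussian n).real bad + mom4 / (2 * c) := by
        rw [integral_add hi1 (hYi.mul_const _), integral_add (integrable_const _)
          ((integrable_const _).indicator hb), integral_mul_const, hYv, integral_indicator_const _ hb]
        simp
        ring
    _ ≤ _ := by gcongr

lemma asym (a b A Q κ : ℝ) (hb : 0 < b) (hκ : 0 < κ) : ∀ᶠ n : ℕ in Filter.atTop,
    A / n + Q * Real.exp ((n : ℝ) ^ 2 * (a * (n : ℝ) ^ 2 + 1) - Real.exp (b * n) / 4) ≤ κ := by
  have hx : Filter.Tendsto (fun n : ℕ => (n : ℝ)) Filter.atTop Filter.atTop :=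
    tendsto_natCast_atTop_atTop
  have h1 : Filter.Tendsto (fun n : ℕ => A / (n : ℝ)) Filter.atTop (nhds 0) :=
    tendsto_const_nhds.div_atTop hx
  have hk : ∀ k : ℕ, Filter.Tendsto (fun n : ℕ => (n : ℝ) ^ k / Real.exp (b * n))
      Filter.atTop (nhds 0) := fun k => by
    have := (tendsto_rpow_mul_exp_neg_mul_atTop_nhds_zero k b hb).comp hx
    refine this.congr fun n => ?_
    simp only [Function.comp, Real.rpow_natCast]
    rw [neg_mul, Real.exp_neg, div_eq_mul_inv]
  have hsum : Filter.Tendsto (fun n : ℕ => a * ((n : ℝ) ^ 4 / Real.exp (b * n)) +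
      (n : ℝ) ^ 2 / Real.exp (b * n) + (n : ℝ) ^ 1 / Real.exp (b * n)) Filter.atTop (nhds 0) := by
    have := (((hk 4).const_mul a).add (hk 2)).add (hk 1)
    simpa using this
  have hev : ∀ᶠ n : ℕ in Filter.atTop,
      (n : ℝ) ^ 2 * (a * (n : ℝ) ^ 2 + 1) - Real.exp (b * n) / 4 ≤ -(n : ℝ) := by
    filter_upwards [hsum.eventually_le_const (show (0 : ℝ) < 1 / 4 by norm_num)] with n hn
    have he := Real.exp_pos (b * n)
    have h2 : (a * (n : ℝ) ^ 4 + (n : ℝ) ^ 2 + (n : ℝ)) / Real.exp (b * n) ≤ 1 / 4 := by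
      refine le_trans (le_of_eq ?_) hn
      ring
    rw [div_le_iff₀ he] at h2
    nlinarith
  have h3 : Filter.Tendsto (fun n : ℕ =>
      Real.exp ((n : ℝ) ^ 2 * (a * (n : ℝ) ^ 2 + 1) - Real.exp (b * n) / 4))
      Filter.atTop (nhds 0) := by
    have h4 : Filter.Tendsto (fun n : ℕ => Real.exp (-(n : ℝ))) Filter.atTop (nhds 0) :=
      Real.tendsto_exp_neg_atTop_nhds_zero.comp hx
    refine tendsto_of_tendsto_of_tendsto_of_le_of_le' tendsto_const_nhds h4
      (Filter.Eventually.of_forall fun n => (Real.exp_pos _).le) ?_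
    filter_upwards [hev] with n hn
    exact Real.exp_le_exp.2 hn
  have h5 := h1.add (h3.const_mul Q)
  simp only [mul_zero, add_zero] at h5
  exact h5.eventually_le_const hκ

lemma size_ok (R ε : ℝ) (hR : 0 < R) (hε : 0 < ε) (K : ℕ) : ∀ᶠ n : ℕ in Filter.atTop,
    K * ⌊(2 : ℝ) ^ ((n : ℝ) * (R + ε / 2))⌋₊ + 1 ≤ ⌊(2 : ℝ) ^ ((n : ℝ) * (R + ε))⌋₊ := by
  have hx : Filter.Tendsto (fun n : ℕ => (n : ℝ) * (ε / 2)) Filter.atTop Filter.atTop :=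
    tendsto_natCast_atTop_atTop.atTop_mul_const (by positivity)
  have h1 := (tendsto_rpow_atTop_of_base_gt_one 2 (by norm_num)).comp hx
  filter_upwards [h1.eventually_ge_atTop ((K : ℝ) + 1)] with n hn
  simp only [Function.comp] at hn
  set X := (2 : ℝ) ^ ((n : ℝ) * (R + ε / 2)) with hX
  have hX1 : 1 ≤ X := Real.one_le_rpow (by norm_num) (by positivity)
  have hXX : (2 : ℝ) ^ ((n : ℝ) * (R + ε)) = 2 ^ ((n : ℝ) * (ε / 2)) * X := by
    rw [hX, ← Real.rpow_add (by norm_num)]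
    congr 1
    ring
  rw [hXX]
  refine Nat.le_floor ?_
  push_cast
  have h2 := Nat.floor_le (zero_le_one.trans hX1)
  have h3 : (K : ℝ) * ⌊X⌋₊ ≤ K * X := by gcongr
  nlinarith

lemma exists_codebook {n K M Q : ℕ} (C : Fin M → Fin n → ℝ) (σ : Fin K → ℝ)
    (hQ : K * M + 1 ≤ Q) : ∃ g : Fin Q → Fin n → ℝ, (∃ q, g q = 0) ∧
      ∀ k j, ∃ q, g q = σ k • C j := by
  have hc : Fintype.card (Option (Fin K × Fin M)) ≤ Fintype.card (Fin Q) := by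
    simpa using hQ
  obtain ⟨e⟩ := Function.Embedding.nonempty_of_card_le hc
  set F : Option (Fin K × Fin M) → Fin n → ℝ := fun o => o.elim 0 fun p => σ p.1 • C p.2
  refine ⟨Function.extend e F 0, ⟨e none, ?_⟩, fun k j => ⟨e (some (k, j)), ?_⟩⟩
  · rw [e.injective.extend_apply]; rfl
  · rw [e.injective.extend_apply]; rfl

lemma rate_bound (n : ℕ) (R ε δ : ℝ) (hR : 0 < R) (hε : 0 < ε) (hδ : δ ≤ ε / 4 * Real.log 2) :
    Real.exp (ε / 4 * Real.log 2 * n) / 4 ≤ (⌊(2 : ℝ) ^ ((n : ℝ) * (R + ε / 2))⌋₊ : ℝ) *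
      (Real.exp (-(n * (R * Real.log 2 + δ))) / 2) := by
  set X := (2 : ℝ) ^ ((n : ℝ) * (R + ε / 2)) with hX
  have hX1 : 1 ≤ X := Real.one_le_rpow (by norm_num) (by positivity)
  have h1 : X / 2 ≤ ⌊X⌋₊ := by
    have h2 := Nat.lt_floor_add_one X
    have h3 : (1 : ℝ) ≤ ⌊X⌋₊ := by
      have : 1 ≤ ⌊X⌋₊ := Nat.le_floor (by simpa using hX1)
      exact_mod_cast this
    linarith
  have hXe : X = Real.exp (Real.log 2 * (n * (R + ε / 2))) := by
    rw [hX, Real.rpow_def_of_pos (by norm_num)]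
  calc _ ≤ Real.exp (Real.log 2 * (n * (R + ε / 2)) + -(n * (R * Real.log 2 + δ))) / 4 := by
        have hn : (0 : ℝ) ≤ n := Nat.cast_nonneg n
        gcongr
        nlinarith
    _ = X / 2 * (Real.exp (-(n * (R * Real.log 2 + δ))) / 2) := by
        rw [Real.exp_add, ← hXe]; ring
    _ ≤ _ := by gcongr

lemma card_bound (n N K' : ℕ) (a : ℝ) (hN : (N : ℝ) ≤ a * (n : ℝ) ^ 2 + 2) :
    (((N ^ n) ^ n * (K' + 1) : ℕ) : ℝ) ≤
      (K' + 1) * Real.exp ((n : ℝ) ^ 2 * (a * (n : ℝ) ^ 2 + 1)) := by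
  have h1 : (N : ℝ) ≤ Real.exp (a * (n : ℝ) ^ 2 + 1) := by
    have := Real.add_one_le_exp (a * (n : ℝ) ^ 2 + 1)
    linarith
  push_cast
  rw [mul_comm]
  refine mul_le_mul_of_nonneg_left ?_ (by positivity)
  calc (((N : ℝ) ^ n) ^ n) ≤ (Real.exp (a * (n : ℝ) ^ 2 + 1) ^ n) ^ n := by gcongr
    _ = _ := by rw [← Real.exp_nat_mul, ← Real.exp_nat_mul]; congr 1; ring

lemma main_code (R ε η : ℝ) (hR : 0 < R) (hε : 0 < ε) (hη : 0 < η) : ∀ᶠ n : ℕ in Filter.atTop,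
    ∃ g : Fin ⌊(2 : ℝ) ^ ((n : ℝ) * (R + ε))⌋₊ → Fin n → ℝ, (∃ q, g q = 0) ∧
      ∀ (Sig U : Matrix (Fin n) (Fin n) ℝ) (lam : Fin n → ℝ), Adm Sig U lam →
        ∀ m : (Fin n → ℝ) → ℝ, (∀ w, 0 ≤ m w) → (∀ w q, m w ≤ dSig Sig w (g q)) →
          1 / (n : ℝ) * ∫ w, m w ∂(stdGaussian n) ≤ DDrc lam R + η := by
  have hlog : 0 < Real.log 2 := Real.log_pos (by norm_num)
  set T0 := 2 * R * Real.log 2 with hT0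
  have hT0p : 0 < T0 := by positivity
  set δ := min (η / 8) (ε / 4 * Real.log 2) with hδ
  have hδp : 0 < δ := lt_min (by positivity) (by positivity)
  obtain ⟨K0, hK0⟩ := exists_nat_gt (8 / (η * T0))
  obtain ⟨K', hK'⟩ := exists_nat_gt (8 / η)
  have hK0p : (0 : ℝ) < K0 := lt_trans (by positivity) hK0
  have hK'p : (0 : ℝ) < K' := lt_trans (by positivity) hK'
  have hb1 : 1 / ((K0 : ℝ) * T0) ≤ η / 8 := by
    rw [div_lt_iff₀ (by positivity)] at hK0
    rw [div_le_iff₀ (by positivity)]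
    linarith
  have hb2 : 1 / (K' : ℝ) ≤ η / 8 := by
    rw [div_lt_iff₀ (by positivity)] at hK'
    rw [div_le_iff₀ (by positivity)]
    linarith
  have hm4 := mom4_nonneg
  have hC0 := C0_pos
  set c := 4 * (mom4 + 1) / η with hc
  have hcp : 0 < c := by positivity
  have hb3 : mom4 / (2 * c) ≤ η / 8 := by
    rw [div_le_iff₀ (by positivity)]
    have : η / 8 * (2 * c) = mom4 + 1 := by rw [hc]; field_simp; norm_num
    linarith
  set A := 2 * (6 * C0 / (T0 * δ) ^ 2 + 6 * C0 + 2 * C0 / δ ^ 2) with hA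
  set a := 48 / η with ha
  have hev := asym a (ε / 4 * Real.log 2) A (K' + 1) (η / (4 * c)) (by positivity) (by positivity)
  filter_upwards [hev, size_ok R ε hR hε K0, Filter.eventually_gt_atTop 0] with n hn1 hn2 hn
  have hn' : (0 : ℝ) < n := by exact_mod_cast hn
  set M := ⌊(2 : ℝ) ^ ((n : ℝ) * (R + ε / 2))⌋₊ with hM
  set L : ℝ := 24 * n / η with hL
  have hLp : 0 < L := by positivity
  set N := ⌊2 * (n : ℝ) * L⌋₊ + 1 with hN
  have hN1 : 2 * (n : ℝ) * L < N := by
    rw [hN]; push_cast; exact Nat.lt_floor_add_one _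
  have hN2 : (N : ℝ) ≤ a * (n : ℝ) ^ 2 + 2 := by
    have h1 : (⌊2 * (n : ℝ) * L⌋₊ : ℝ) ≤ 2 * (n : ℝ) * L := Nat.floor_le (by positivity)
    have h2 : 2 * (n : ℝ) * L = a * (n : ℝ) ^ 2 := by rw [hL, ha]; field_simp; norm_num
    rw [hN]; push_cast; linarith
  obtain ⟨C, hC⟩ := exists_net_code hn R hR K0 (by exact_mod_cast hK0p) δ hδp T0 hT0 L hLp N hN1 K'
    (by exact_mod_cast hK'p) M
  obtain ⟨g, hg0, hg⟩ := exists_codebook C (fun k : Fin K0 => √(((k : ℕ) + 1) / (K0 : ℝ))) hn2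
  refine ⟨g, hg0, fun Sig U lam hadm m hm0 hm => ?_⟩
  obtain ⟨k, bad, hbm, hbad, hgood⟩ := hC Sig U lam hadm
  have hP : (stdGaussian n).real bad ≤ η / (4 * c) := by
    refine le_trans ?_ hn1
    have hrw : 2 * (ENNReal.ofReal (6 * C0 / (n * (T0 * δ) ^ 2)) +
          ENNReal.ofReal (6 * C0 / n) + ENNReal.ofReal (2 * C0 / (n * δ ^ 2))) +
          ENNReal.ofReal (((N ^ n) ^ n * (K' + 1) : ℕ) * Real.exp (-(M *
            (Real.exp (-(n * (R * Real.log 2 + δ))) / 2)))) =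
        ENNReal.ofReal (A / n + (((N ^ n) ^ n * (K' + 1) : ℕ) * Real.exp (-(M *
            (Real.exp (-(n * (R * Real.log 2 + δ))) / 2))))) := by
      rw [← ENNReal.ofReal_add (by positivity) (by positivity),
        ← ENNReal.ofReal_add (by positivity) (by positivity),
        show (2 : ENNReal) = ENNReal.ofReal 2 by simp,
        ← ENNReal.ofReal_mul (by norm_num), ← ENNReal.ofReal_add (by positivity) (by positivity)]
      congr 2
      rw [hA]
      field_simp
    rw [hrw] at hbad
    have h1 := ENNReal.toReal_mono ENNReal.ofReal_ne_top hbad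
    rw [ENNReal.toReal_ofReal (by positivity)] at h1
    refine h1.trans ?_
    refine add_le_add le_rfl ?_
    calc _ ≤ ((K' + 1) * Real.exp ((n : ℝ) ^ 2 * (a * (n : ℝ) ^ 2 + 1))) *
          Real.exp (-(Real.exp (ε / 4 * Real.log 2 * n) / 4)) := by
          refine mul_le_mul (card_bound n N K' a hN2) ?_ (Real.exp_pos _).le (by positivity)
          exact Real.exp_le_exp.2 (neg_le_neg (rate_bound n R ε δ hR hε (min_le_right _ _)))
      _ = _ := by rw [mul_assoc, ← Real.exp_add, ← sub_eq_add_neg]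
  have hd := DDrc_mem hn Sig U lam hadm R hR
  have h1 := code_int hn Sig U lam hadm bad hbm
    (DDrc lam R + 1 / K' + 1 / (K0 * T0) + δ + 3 * n / L) c (η / (4 * c)) hcp
    (by have := hd.1; positivity) hP m hm0
    (fun w => by obtain ⟨q, hq⟩ := hg0; rw [← hq]; exact hm w q)
    (fun w hw => by
      obtain ⟨j, hj⟩ := hgood w hw
      refine le_trans ?_ hj
      obtain ⟨q, hq⟩ := hg k j
      have h2 := hm w q
      rw [hq] at h2
      gcongr)
  refine h1.trans ?_
  have h2 : 3 * (n : ℝ) / L = η / 8 := by rw [hL]; field_simp; norm_num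
  have h3 : c / 2 * (η / (4 * c)) = η / 8 := by field_simp; norm_num
  have h4 : δ ≤ η / 8 := min_le_left _ _
  rw [h2, h3]
  linarith

end Aux

/-- existence of a universal quantization scheme which, with probability
`≥ 1 - exp(-n^B)` over the shared randomness `S`, is simultaneously good for
all PSD `Σ` with trace `n`. -/
theorem stmt_2 (Rstar ε η B : ℝ) (hRstar : 0 < Rstar) (hε : 0 < ε) (hη : 0 < η) (hB : 0 < B) :
    ∃ n₀ : ℕ, ∀ n : ℕ, n₀ ≤ n →
      ∃ (R : ℝ) (f : (Fin n → ℝ) → Matrix (Fin n) (Fin n) ℝ → ℝ →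
            Fin ⌊(2 : ℝ) ^ ((n : ℝ) * R)⌋₊)
        (g : Fin ⌊(2 : ℝ) ^ ((n : ℝ) * R)⌋₊ → ℝ → (Fin n → ℝ)),
        R ≤ Rstar + ε ∧
        1 - Real.exp (-(n : ℝ) ^ B) ≤
          ((volume.restrict (Set.Icc (0 : ℝ) 1))
            {s : ℝ |
              ∀ (Sig : Matrix (Fin n) (Fin n) ℝ), Sig.PosSemidef → Sig.trace = (n : ℝ) →
              ∀ (U : Matrix (Fin n) (Fin n) ℝ), U * Uᵀ = 1 →
              ∀ lam : Fin n → ℝ, Sig = U * Matrix.diagonal lam * Uᵀ →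
                (1 / (n : ℝ)) * ∫ w, dSig Sig w (g (f w Sig s) s) ∂(stdGaussian n)
                  ≤ DDrc lam Rstar + η}).toReal := by
  obtain ⟨n₀, hn₀⟩ := Filter.eventually_atTop.1 (main_code Rstar ε η hRstar hε hη)
  refine ⟨n₀, fun n hn => ?_⟩
  obtain ⟨g, ⟨q0, hq0⟩, hg⟩ := hn₀ n hn
  have hmin : ∀ (w : Fin n → ℝ) (Sig : Matrix (Fin n) (Fin n) ℝ),
      ∃ q, ∀ q', dSig Sig w (g q) ≤ dSig Sig w (g q') := fun w Sig => by
    haveI : Nonempty (Fin ⌊(2 : ℝ) ^ ((n : ℝ) * (Rstar + ε))⌋₊) := ⟨q0⟩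
    exact Finite.exists_min fun q => dSig Sig w (g q)
  choose f hf using hmin
  refine ⟨Rstar + ε, fun w Sig _ => f w Sig, fun q _ => g q, le_rfl, ?_⟩
  have huniv : {s : ℝ |
              ∀ (Sig : Matrix (Fin n) (Fin n) ℝ), Sig.PosSemidef → Sig.trace = (n : ℝ) →
              ∀ (U : Matrix (Fin n) (Fin n) ℝ), U * Uᵀ = 1 →
              ∀ lam : Fin n → ℝ, Sig = U * Matrix.diagonal lam * Uᵀ →
                (1 / (n : ℝ)) * ∫ w, dSig Sig w (g (f w Sig)) ∂(stdGaussian n)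
                  ≤ DDrc lam Rstar + η} = Set.univ := by
    refine Set.eq_univ_of_forall fun s => ?_
    intro Sig hpsd htr U hU lam heq
    refine hg Sig U lam ⟨hpsd, htr, hU, heq⟩ _ (fun w => ?_) (fun w q => hf w Sig q)
    have := hpsd.dotProduct_mulVec_nonneg (w - g (f w Sig))
    rwa [star_trivial] at this
  rw [huniv]
  simp only [Measure.restrict_apply_univ, Real.volume_Icc, sub_zero, ENNReal.ofReal_one,
    ENNReal.toReal_one]
  linarith [Real.exp_pos (-(n : ℝ) ^ B)]
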